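/- arXiv:1302.1715 — 3 statements merged into one kernel-verified Lean document; each statement's English description precedes it below -/
import Mathlib

section
/- Let p be an odd prime. If p ≡ 1 or 3 (mod 8), then there are integers x, y with p = x^2 + 2y^2, and for any such x, Σ_{n=0}^{p-1} A_n · 8^{-n} ≡ 4x^2 (mod p). If p ≡ 5 or 7 (mod 8), then Σ_{n=0}^{p-1} A_n · 8^{-n} ≡ 0 (mod p). -/
open Finset

/-- `A n = ∑_{k=0}^{n} C(2k,k)·C(2n-2k,n-k)·C(n,k)^2`. -/
def A (n : ℕ) : ℕ :=
  ∑ k ∈ Finset.range (n + 1),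
    Nat.choose (2 * k) k * Nat.choose (2 * n - 2 * k) (n - k) * Nat.choose n k ^ 2

lemma cz_lt {K : Type*} [Field K] {p : ℕ} [CharP K p] {i : ℕ} (h0 : 0 < i) (hi : i < p) : (i : K) ≠ 0 := by
  rw [Ne, CharP.cast_eq_zero_iff K p]
  exact Nat.not_dvd_of_pos_of_lt h0 hi

/-- `(i+1) C(m,i+1) = C(m,i) (m-i)` in any field. -/
lemma choose_rec {K : Type*} [Field K] (m i : ℕ) :
    ((i : K) + 1) * (m.choose (i + 1) : K) = (m.choose i : K) * ((m : K) - i) := by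
  have h := Nat.choose_succ_right_eq m i
  rcases le_or_gt i m with hi | hi
  · have h' : ((m.choose (i+1) * (i+1) : ℕ) : K) = ((m.choose i * (m - i) : ℕ) : K) := by rw [h]
    push_cast [Nat.cast_sub hi] at h'
    linear_combination h'
  · rw [Nat.choose_eq_zero_of_lt hi, Nat.choose_eq_zero_of_lt (by omega)]; simp

lemma choose_add_rec {K : Type*} [Field K] (a i : ℕ) :
    ((i : K) + 1) * ((a + (i + 1)).choose (i + 1) : K) = ((a : K) + i + 1) * ((a + i).choose i : K) := by
  have h := Nat.add_one_mul_choose_eq (a + i) i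
  have h' : (((a + i + 1) * (a+i).choose i : ℕ) : K) = (((a+i+1).choose (i+1) * (i + 1) : ℕ) : K) := by rw [h]
  push_cast at h'
  rw [show a + (i+1) = a + i + 1 by ring]
  linear_combination -h'

lemma central {K : Type*} [Field K] {p n : ℕ} [CharP K p] (hp : p = 2 * n + 1) (k : ℕ) (hk : k < p) :
    ((2 * k).choose k : K) = (n.choose k : K) * (-4) ^ k := by
  induction k with
  | zero => simp
  | succ k ih =>
    have ih := ih (by omega)
    have h1 := Nat.succ_mul_centralBinom_succ k
    simp only [Nat.centralBinom] at h1
    have h1' : (((k+1) * (2 * (k+1)).choose (k+1) : ℕ) : K) = ((2 * (2 * k + 1) * (2 * k).choose k : ℕ) : K) := by rw [h1]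
    push_cast at h1'
    have h2 := choose_rec (K := K) n k
    have h3 : (2 * n + 1 : K) = 0 := by
      have := CharP.cast_eq_zero K p
      rw [hp] at this; exact_mod_cast this
    have h4 : ((k : K) + 1) ≠ 0 := by exact_mod_cast cz_lt (K := K) (p := p) (Nat.succ_pos k) hk
    apply mul_left_cancel₀ h4
    rw [h1', ih, pow_succ]
    linear_combination (4 * (-4)^k) * h2 + 2 * (n.choose k : K) * (-4)^k * h3

lemma choose_refl {K : Type*} [Field K] {p : ℕ} [CharP K p] (a b : ℕ) (hab : a + b + 1 = p) (i : ℕ) (hi : i < p) :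
    (b.choose i : K) = (-1) ^ i * ((a + i).choose i : K) := by
  induction i with
  | zero => simp
  | succ i ih =>
    have ih := ih (by omega)
    have h1 := choose_rec (K := K) b i
    have h2 := choose_add_rec (K := K) a i
    have h3 : (a + b + 1 : K) = 0 := by
      have := CharP.cast_eq_zero K p
      rw [← hab] at this; exact_mod_cast this
    have h4 : ((i : K) + 1) ≠ 0 := by exact_mod_cast cz_lt (K := K) (p := p) (Nat.succ_pos i) hi
    apply mul_left_cancel₀ h4
    rw [h1, ih, pow_succ]
    linear_combination (-1)^i * h2 + (-1)^i * ((a + i).choose i : K) * h3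

lemma vander3 (k l i a : ℕ) (hi : i ≤ l) (hl : l ≤ a) :
    ∑ j ∈ range (a + 1), k.choose j * l.choose j * j.choose i = l.choose i * (k + l - i).choose l := by
  have h1 : ∑ j ∈ range (a + 1), k.choose j * l.choose j * j.choose i
      = ∑ j ∈ range (l + 1), k.choose j * l.choose j * j.choose i := by
    symm
    apply Finset.sum_subset
    · intro x; simp; omega
    · intro x _ hx
      have : l < x := by simpa using hx
      rw [Nat.choose_eq_zero_of_lt this]; simp
  rw [h1, show k + l - i = k + (l - i) by omega, Nat.add_choose_eq,
    Finset.Nat.sum_antidiagonal_eq_sum_range_succ_mk, Finset.mul_sum]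
  apply Finset.sum_congr rfl
  intro j hj
  have hj : j ≤ l := by simp at hj; omega
  simp only
  rcases le_or_gt i j with hij | hij
  · rw [mul_assoc, Nat.choose_mul hij, ← Nat.choose_symm_of_eq_add (n := l - i) (a := l - j) (b := j - i) (by omega)]
    ring
  · rw [Nat.choose_eq_zero_of_lt hij, Nat.choose_eq_zero_of_lt (show l - i < l - j by omega)]; simp

lemma vander (k l a : ℕ) (hl : l ≤ a) : ∑ j ∈ range (a + 1), k.choose j * l.choose j = (k + l).choose l := by
  simpa using vander3 k l 0 a (by omega) hl

lemma riordan (k l a : ℕ) (hl : l ≤ a) :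
    ∑ j ∈ range (a + 1), k.choose j * l.choose j * (k + l + j).choose j = (k + l).choose l ^ 2 := by
  have h1 : ∑ j ∈ range (a + 1), k.choose j * l.choose j * (k + l + j).choose j
      = ∑ j ∈ range (a + 1), ∑ i ∈ range (a + 1), (k + l).choose i * (k.choose j * l.choose j * j.choose i) := by
    apply Finset.sum_congr rfl
    intro j hj
    rw [← vander (k + l) j a (by simp at hj; omega), Finset.mul_sum]
    apply Finset.sum_congr rfl
    intro i _
    ring
  rw [h1, Finset.sum_comm]
  simp_rw [← Finset.mul_sum]
  have h2 : ∀ i ∈ range (a + 1), (k + l).choose i * (∑ j ∈ range (a + 1), k.choose j * l.choose j * j.choose i)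
      = (k + l).choose l * (k.choose i * l.choose i) := by
    intro i _
    rcases le_or_gt i l with hi | hi
    · rw [vander3 k l i a hi hl]
      have e1 := Nat.choose_mul (n := k + l) (k := l + i) (s := i) (by omega)
      have e2 := Nat.choose_mul (n := k + l) (k := l + i) (s := l) (by omega)
      rw [show l + i - i = l by omega] at e1
      rw [show l + i - l = i by omega, show k + l - l = k by omega] at e2
      have e3 : (l + i).choose i = (l + i).choose l := by
        rw [Nat.choose_symm_add]
      rw [e3, e2] at e1
      calc _ = ((k + l).choose i * (k + l - i).choose l) * l.choose i := by ring
        _ = _ := by rw [← e1]; ring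
    · rw [Nat.choose_eq_zero_of_lt hi]
      have : ∑ j ∈ range (a + 1), k.choose j * l.choose j * j.choose i = 0 := by
        apply Finset.sum_eq_zero
        intro j _
        rcases le_or_gt j l with hj | hj
        · rw [Nat.choose_eq_zero_of_lt (show j < i by omega)]; simp
        · rw [Nat.choose_eq_zero_of_lt hj]; simp
      rw [this]; simp
  rw [Finset.sum_congr rfl h2, ← Finset.mul_sum, vander k l a hl]
  ring

open Polynomial in
lemma conv_coeff {K : Type*} [Field K] (n j m : ℕ) :
    ∑ kl ∈ antidiagonal m, ((n.choose kl.1 * kl.1.choose j : ℕ) : K) * ((n.choose kl.2 * kl.2.choose j : ℕ) : K)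
      = (n.choose j : K) ^ 2 * (if 2 * j ≤ m then ((2 * (n - j)).choose (m - 2 * j) : K) else 0) := by
  have hG : ∀ k, ((n.choose k * k.choose j : ℕ) : K) = (C (n.choose j : K) * (X ^ j * (1 + X) ^ (n - j))).coeff k := by
    intro k
    rw [coeff_C_mul, coeff_X_pow_mul']
    split_ifs with h
    · rw [coeff_one_add_X_pow, Nat.choose_mul h]; push_cast; rfl
    · rw [Nat.choose_eq_zero_of_lt (show k < j by omega)]; simp
  simp_rw [hG]
  rw [← coeff_mul]
  have : (C (n.choose j : K) * (X ^ j * (1 + X) ^ (n - j))) * (C (n.choose j : K) * (X ^ j * (1 + X) ^ (n - j)))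
      = C ((n.choose j : K)^2) * (X ^ (2 * j) * (1 + X) ^ (2 * (n - j))) := by
    rw [C_pow]; ring
  rw [this, coeff_C_mul, coeff_X_pow_mul', coeff_one_add_X_pow]

lemma A_cast {K : Type*} [Field K] {p n : ℕ} [CharP K p] (hp : p = 2 * n + 1) (h2 : (2 : K) ≠ 0) (m : ℕ) (hm : m < p) :
    (A m : K) / 8 ^ m = ∑ j ∈ range p, (-1/2) ^ m * ((m + j).choose j : K) *
      ∑ kl ∈ antidiagonal m, ((n.choose kl.1 * kl.1.choose j : ℕ) : K) * ((n.choose kl.2 * kl.2.choose j : ℕ) : K) := by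
  have h8 : (8 : K) ^ m ≠ 0 := by
    have : (8 : K) = 2 ^ 3 := by norm_num
    rw [this]; positivity
  have h1 : (A m : K) = ∑ kl ∈ antidiagonal m, ((2 * kl.1).choose kl.1 : K) * ((2 * kl.2).choose kl.2 : K) * ((kl.1 + kl.2).choose kl.2 : K) ^ 2 := by
    rw [Finset.Nat.sum_antidiagonal_eq_sum_range_succ_mk, A]
    push_cast
    apply Finset.sum_congr rfl
    intro k hk
    have hk : k ≤ m := by simp at hk; omega
    rw [show 2 * m - 2 * k = 2 * (m - k) by omega, show k + (m - k) = m by omega, Nat.choose_symm hk]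
  rw [h1]
  simp_rw [Finset.mul_sum]
  rw [Finset.sum_comm, Finset.sum_div]
  apply Finset.sum_congr rfl
  rintro ⟨k, l⟩ hkl
  have hkl : k + l = m := by simpa using hkl
  simp only
  have h2 := riordan k l (p - 1) (by omega)
  rw [show p - 1 + 1 = p by omega] at h2
  have h3 : (((k + l).choose l ^ 2 : ℕ) : K) = ((∑ j ∈ range p, k.choose j * l.choose j * (k + l + j).choose j : ℕ) : K) := by rw [h2]
  push_cast at h3
  rw [h3, central hp k (by omega), central hp l (by omega), Finset.mul_sum, Finset.sum_div]
  apply Finset.sum_congr rfl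
  intro j _
  rw [hkl, div_eq_iff h8]
  have h5 : (-1/2 : K) ^ m * 8 ^ m = (-4) ^ k * (-4)^l := by
    rw [← mul_pow, ← pow_add, hkl]
    congr 1
    field_simp; norm_num
  push_cast
  linear_combination -(((m + j).choose j : K) * (↑(n.choose k) * ↑(k.choose j) * (↑(n.choose l) * ↑(l.choose j))) : K) * h5

lemma choose_three {K : Type*} [Field K] {p j : ℕ} [CharP K p] (hpp : p.Prime) (h2 : 2 * j < p) (h3 : p ≤ 3 * j) :
    ((3 * j).choose j : K) = 0 := by
  rw [CharP.cast_eq_zero_iff K p]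
  have := hpp.dvd_choose_add (a := 2 * j) (b := j) (by omega) (by omega) (by omega)
  rw [show 3 * j = 2 * j + j by ring, Nat.choose_symm_add.symm]
  exact this

lemma inner_sum_m {K : Type*} [Field K] {p n : ℕ} [CharP K p] (hpp : p.Prime) (hp : p = 2 * n + 1) (h2 : (2 : K) ≠ 0)
    (h2p : (2 : K) ^ (p - 1) = 1)
    (j : ℕ) (hj : j ≤ n) :
    ∑ m ∈ range p, (-1/2 : K) ^ m * ((m + j).choose j : K) * (if 2 * j ≤ m then ((2 * (n - j)).choose (m - 2 * j) : K) else 0)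
      = ((3 * j).choose j : K) * 2 ^ j := by
  have e1 : ∑ m ∈ range p, (-1/2 : K) ^ m * ((m + j).choose j : K) * (if 2 * j ≤ m then ((2 * (n - j)).choose (m - 2 * j) : K) else 0)
     = ∑ i ∈ range (p - 2 * j), (-1/2 : K) ^ (2 * j + i) * ((2 * j + i + j).choose j : K) * ((2 * (n - j)).choose i : K) := by
    rw [← Finset.sum_range_add_sum_Ico (n := p) (m := 2 * j) _ (by omega), Finset.sum_Ico_eq_sum_range]
    rw [Finset.sum_eq_zero, zero_add]
    · apply Finset.sum_congr rfl
      intro i _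
      rw [if_pos (by omega), show 2 * j + i - 2 * j = i by omega]
    · intro m hm
      rw [if_neg (by simp at hm; omega)]; simp
  have e2 : ∀ i ∈ range (p - 2 * j), (-1/2 : K) ^ (2 * j + i) * ((2 * j + i + j).choose j : K) * ((2 * (n - j)).choose i : K)
      = ((3 * j).choose j : K) * (1/4)^j * ((1/2)^i * ((3 * j + i).choose i : K)) := by
    intro i hi
    have hi : i < p - 2 * j := by simpa using hi
    rw [choose_refl (K := K) (p := p) (2 * j) (2 * (n - j)) (by omega) i (by omega)]
    have e3 : (2 * j + i + j).choose j * (2 * j + i).choose i = (3 * j).choose j * (3 * j + i).choose i := by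
      have a1 := Nat.choose_mul (n := 3 * j + i) (k := j + i) (s := j) (by omega)
      have a2 := Nat.choose_mul (n := 3 * j + i) (k := j + i) (s := i) (by omega)
      rw [show 3 * j + i - j = 2 * j + i by omega, show j + i - j = i by omega] at a1
      rw [show 3 * j + i - i = 3 * j by omega, show j + i - i = j by omega] at a2
      have a3 : (j + i).choose i = (j + i).choose j := by rw [Nat.choose_symm_add]
      rw [show 2 * j + i + j = 3 * j + i by ring, ← a1, ← a3, a2, mul_comm]
    have e4 : ((2 * j + i + j).choose j : K) * ((2 * j + i).choose i : K) = ((3 * j).choose j : K) * ((3 * j + i).choose i : K) := by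
      rw [← Nat.cast_mul, ← Nat.cast_mul, e3]
    have e5 : (-1/2 : K) ^ (2 * j + i) * (-1)^i = (1/4)^j * (1/2)^i := by
      rw [pow_add, pow_mul, mul_assoc, ← mul_pow, show (-1/2 : K) * -1 = 1/2 by ring, show (-1/2 : K)^2 = 1/4 by rw [div_pow]; norm_num]
    linear_combination (-1/2 : K) ^ (2 * j + i) * (-1)^i * e4 + ((3 * j).choose j : K) * ((3 * j + i).choose i : K) * e5
  rw [e1, Finset.sum_congr rfl e2, ← Finset.mul_sum]
  rcases le_or_gt p (3 * j) with h | h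
  · rw [choose_three hpp (by omega) h]; simp
  · have e6 : ∑ i ∈ range (p - 2 * j), (1/2 : K)^i * ((3 * j + i).choose i : K) = (1 + (-1/2)) ^ (p - 1 - 3 * j) := by
      rw [add_comm, add_pow]
      have : ∑ i ∈ range (p - 2 * j), (1/2 : K)^i * ((3 * j + i).choose i : K) = ∑ i ∈ range (p - 2 * j), (-1/2 : K)^i * ((p - 1 - 3 * j).choose i : K) := by
        apply Finset.sum_congr rfl
        intro i hi
        rw [choose_refl (K := K) (p := p) (3 * j) (p - 1 - 3 * j) (by omega) i (by simp at hi; omega), ← mul_assoc, ← mul_pow, show (-1/2 : K) * -1 = 1/2 by ring]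
      rw [this]
      symm
      have e7 : ∀ i, (-1/2 : K) ^ i * 1 ^ (p - 1 - 3 * j - i) * ((p - 1 - 3 * j).choose i : K) = (-1/2 : K)^i * ((p - 1 - 3 * j).choose i : K) := by
        intro i; simp
      simp_rw [e7]
      apply Finset.sum_subset
      · intro x; simp; omega
      · intro x _ hx
        rw [Nat.choose_eq_zero_of_lt (by simp at hx; omega)]; simp
    rw [e6]
    have e8 : (1 + (-1/2) : K) = 1/2 := by field_simp; norm_num
    have e9 : (1/2 : K) ^ (p - 1 - 3 * j) * (1/2) ^ (3 * j) = 1 := by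
      rw [← pow_add, show p - 1 - 3 * j + 3 * j = p - 1 by omega, div_pow, h2p]; simp
    have e10 : (1/2 : K)^(3 * j) * 8 ^ j = 1 := by
      rw [pow_mul, ← mul_pow]
      have : ((1/2)^3 * 8 : K) = 1 := by field_simp; norm_num
      rw [this, one_pow]
    have e11 : (1/4 : K)^j * 8 ^ j = 2 ^ j := by
      rw [← mul_pow]
      have h4 : (4 : K) ≠ 0 := by
        have : (4 : K) = 2 ^ 2 := by norm_num
        rw [this]; positivity
      congr 1
      field_simp; norm_num
    rw [e8, mul_assoc]
    congr 1
    rw [← e11]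
    linear_combination (1/4 : K)^j * 8^j * e9 - (1/4 : K)^j * (1/2 : K) ^ (p - 1 - 3 * j) * e10

lemma step1 {K : Type*} [Field K] {p n : ℕ} [CharP K p] (hpp : p.Prime) (hp : p = 2 * n + 1) (h2 : (2 : K) ≠ 0)
    (h2p : (2 : K) ^ (p - 1) = 1) :
    ∑ m ∈ range p, (A m : K) / 8 ^ m = ∑ j ∈ range p, (n.choose j : K) ^ 2 * ((3 * j).choose j : K) * 2 ^ j := by
  rw [Finset.sum_congr rfl (fun m hm => A_cast hp h2 m (by simpa using hm)), Finset.sum_comm]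
  apply Finset.sum_congr rfl
  intro j _
  rcases le_or_gt j n with hj | hj
  · rw [mul_assoc, ← inner_sum_m hpp hp h2 h2p j hj, Finset.mul_sum]
    apply Finset.sum_congr rfl
    intro m _
    rw [conv_coeff n j m]; ring
  · rw [Nat.choose_eq_zero_of_lt hj]
    simp only [Nat.cast_zero, ne_eq, OfNat.ofNat_ne_zero, not_false_eq_true, zero_pow, zero_mul]
    apply Finset.sum_eq_zero
    intro m _
    rw [Finset.sum_eq_zero, mul_zero]
    rintro ⟨k, l⟩ _
    have : n.choose k * k.choose j = 0 := by
      rcases le_or_gt k n with hk | hk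
      · rw [Nat.choose_eq_zero_of_lt (show k < j by omega)]; simp
      · rw [Nat.choose_eq_zero_of_lt hk]; simp
    simp [this]

section clausen
open Polynomial

/-- The third order operator annihilating squares of Legendre polynomials. -/
noncomputable def opT (lam : ℚ) (M : ℚ[X]) : ℚ[X] :=
  derivative ((X + X ^ 2) * (derivative ((X + X ^ 2) * derivative M) - C (2 * lam) * M))
    - C (2 * lam) * ((X + X ^ 2) * derivative M)

lemma opT_add (lam : ℚ) (M N : ℚ[X]) : opT lam (M + N) = opT lam M + opT lam N := by
  simp only [opT, map_add, mul_add, map_sub, mul_sub]; ring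

lemma opT_smul (lam c : ℚ) (M : ℚ[X]) : opT lam (C c * M) = C c * opT lam M := by
  simp only [opT, map_sub, derivative_mul, derivative_C, zero_mul, zero_add]
  simp only [derivative_add, derivative_mul, derivative_C, zero_mul, zero_add]
  ring

lemma opT_zero (lam : ℚ) : opT lam 0 = 0 := by simp [opT]

lemma opT_sub (lam : ℚ) (M N : ℚ[X]) : opT lam (M - N) = opT lam M - opT lam N := by
  simp only [opT, map_sub, mul_sub]; ring

lemma opT_one (lam : ℚ) : opT lam 1 = - (C (2 * lam) * (1 + 2 * X)) := by
  simp [opT]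
  ring

lemma opT_pow (lam : ℚ) (k : ℕ) : opT lam ((X + X ^ 2) ^ (k + 1)) =
    (1 + 2 * X) * (C (((k : ℚ) + 1) ^ 3) * (X + X ^ 2) ^ k
      + C (2 * (2 * k + 3) * ((k + 1) * (k + 2) - lam)) * (X + X ^ 2) ^ (k + 1)) := by
  set q : ℚ[X] := X + X ^ 2 with hq
  have dq : derivative q = 1 + 2 * X := by simp [hq]; norm_num
  have dpow : ∀ m : ℕ, derivative (q ^ (m + 1)) = C ((m : ℚ) + 1) * q ^ m * (1 + 2 * X) := by
    intro m; rw [derivative_pow_succ, dq]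
  have hsq : (1 + 2 * X : ℚ[X]) ^ 2 = 1 + 4 * q := by rw [hq]; ring
  have ddq : derivative (1 + 2 * X : ℚ[X]) = 2 := by simp
  have e1 : derivative (q * derivative (q ^ (k + 1))) =
      C (((k : ℚ) + 1) ^ 2) * q ^ k + C (((k : ℚ) + 1) * (4 * k + 6)) * q ^ (k + 1) := by
    have : q * derivative (q ^ (k + 1)) = C ((k : ℚ) + 1) * (q ^ (k + 1) * (1 + 2 * X)) := by
      rw [dpow]; ring
    rw [this, derivative_C_mul, derivative_mul, dpow, ddq]
    simp only [map_mul, map_pow, map_add, map_one, map_natCast, map_ofNat]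
    linear_combination ((k : ℚ[X]) + 1) ^ 2 * q ^ k * hsq
  have e2 : q * (derivative (q * derivative (q ^ (k + 1))) - C (2 * lam) * q ^ (k + 1)) =
      C (((k : ℚ) + 1) ^ 2) * q ^ (k + 1) + C (((k : ℚ) + 1) * (4 * k + 6) - 2 * lam) * q ^ (k + 1 + 1) := by
    rw [e1]
    simp only [map_mul, map_pow, map_add, map_one, map_natCast, map_ofNat, map_sub]
    ring
  rw [opT, e2, derivative_add, derivative_C_mul, derivative_C_mul, dpow, dpow, ← hq]
  simp only [map_mul, map_pow, map_add, map_one, map_natCast, map_ofNat, map_sub, Nat.cast_add, Nat.cast_one]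
  ring

lemma coeff_X_mul_zero (P : ℚ[X]) (i : ℕ) (h : ∀ j < i, P.coeff j = 0) : (X * P).coeff i = 0 := by
  cases i with
  | zero => simp
  | succ i => rw [coeff_X_mul]; exact h i (by omega)

lemma opT_unique (lam : ℚ) (D : ℚ[X]) (h : opT lam D = 0) (h0 : D.coeff 0 = 0) : D = 0 := by
  have key : ∀ i, ∀ j ≤ i, D.coeff j = 0 := by
    intro i
    induction i with
    | zero => intro j hj; rw [Nat.le_zero.mp hj]; exact h0
    | succ i ih =>
      have hD1 : ∀ j < i, (derivative D).coeff j = 0 := by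
        intro j hj; rw [coeff_derivative, ih (j + 1) (by omega), zero_mul]
      have hq : ∀ P : ℚ[X], ∀ m, ((X + X ^ 2) * P).coeff (m + 1) = P.coeff m + (X * P).coeff m := by
        intro P m
        rw [show (X + X ^ 2) * P = X * P + X * (X * P) by ring, coeff_add, coeff_X_mul, coeff_X_mul]
      have hE : ∀ m, (derivative ((X + X ^ 2) * derivative D)).coeff m
          = ((derivative D).coeff m + (X * derivative D).coeff m) * (m + 1) := by
        intro m; rw [coeff_derivative, hq]
      set F := derivative ((X + X ^ 2) * derivative D) - C (2 * lam) * D with hF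
      have hFl : ∀ j < i, F.coeff j = 0 := by
        intro j hj
        rw [hF, coeff_sub, hE, hD1 j hj, coeff_X_mul_zero _ j (fun l hl => hD1 l (by omega)), coeff_C_mul, ih j (by omega)]
        ring
      have hFi : F.coeff i = D.coeff (i + 1) * (i + 1) ^ 2 := by
        rw [hF, coeff_sub, hE, coeff_X_mul_zero _ i hD1, coeff_C_mul, ih i le_rfl, coeff_derivative]
        ring
      have hz : (opT lam D).coeff i = 0 := by rw [h]; simp
      rw [opT, coeff_sub, coeff_derivative, hq, coeff_X_mul_zero F i hFl, hFi, coeff_C_mul] at hz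
      have hq2 : ((X + X ^ 2) * derivative D).coeff i = 0 := by
        cases i with
        | zero => simp
        | succ i =>
          rw [hq, hD1 i (by omega), coeff_X_mul_zero _ i (fun l hl => hD1 l (by omega)), add_zero]
      rw [hq2] at hz
      have hne : ((i : ℚ) + 1) ≠ 0 := by positivity
      have hz2 : D.coeff (i + 1) = 0 := by
        have : D.coeff (i + 1) * ((i : ℚ) + 1) ^ 3 = 0 := by linear_combination hz
        rcases mul_eq_zero.mp this with h' | h'
        · exact h'
        · exact absurd h' (pow_ne_zero 3 hne)
      intro j hj
      rcases Nat.lt_or_ge j (i + 1) with h' | h'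
      · exact ih j (by omega)
      · rw [show j = i + 1 by omega]; exact hz2
  ext i
  simpa using key i i le_rfl

lemma leg_rec (n j : ℕ) : ((j : ℚ) + 1) ^ 2 * ((n.choose (j + 1) * (n + (j + 1)).choose (j + 1) : ℕ) : ℚ)
    = ((n : ℚ) * (n + 1) - j * (j + 1)) * ((n.choose j * (n + j).choose j : ℕ) : ℚ) := by
  have h1 := choose_rec (K := ℚ) n j
  have h2 := choose_add_rec (K := ℚ) n j
  push_cast
  calc _ = (((j : ℚ) + 1) * (n.choose (j + 1) : ℚ)) * (((j : ℚ) + 1) * ((n + (j + 1)).choose (j + 1) : ℚ)) := by ring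
    _ = _ := by rw [h1, h2]; ring

/-- Legendre polynomial `P_n(1+2X)`. -/
noncomputable def leg (n : ℕ) : ℚ[X] := ∑ j ∈ range (n + 1), C ((n.choose j * (n + j).choose j : ℕ) : ℚ) * X ^ j

lemma leg_coeff (n j : ℕ) : (leg n).coeff j = ((n.choose j * (n + j).choose j : ℕ) : ℚ) := by
  rw [leg, finsetSum_coeff]
  simp only [coeff_C_mul_X_pow]
  rw [Finset.sum_ite_eq]
  split_ifs with h
  · rfl
  · rw [Nat.choose_eq_zero_of_lt (by simpa using h)]; simp

lemma leg_ode (n : ℕ) : derivative ((X + X ^ 2) * derivative (leg n)) = C ((n : ℚ) * (n + 1)) * leg n := by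
  ext j
  have hr := leg_rec n j
  rw [coeff_derivative, show (X + X ^ 2) * derivative (leg n) = X * derivative (leg n) + X * (X * derivative (leg n)) by ring,
    coeff_add, coeff_X_mul, coeff_X_mul, coeff_C_mul, coeff_derivative, leg_coeff]
  have : (X * derivative (leg n)).coeff j = j * ((n.choose j * (n + j).choose j : ℕ) : ℚ) := by
    cases j with
    | zero => simp
    | succ j => rw [coeff_X_mul, coeff_derivative, leg_coeff]; push_cast; ring
  rw [this, leg_coeff]
  linear_combination hr

lemma leg_sq_op (n : ℕ) : opT ((n : ℚ) * (n + 1)) (leg n ^ 2) = 0 := by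
  have h := leg_ode n
  set L := leg n
  set W := (X + X ^ 2) * derivative L with hW
  have e1 : (X + X ^ 2) * derivative (L ^ 2) = C 2 * (L * W) := by
    rw [derivative_sq, hW]; ring
  have e2 : (X + X ^ 2) * (derivative ((X + X ^ 2) * derivative (L ^ 2)) - C (2 * ((n : ℚ) * (n + 1))) * L ^ 2) = C 2 * W ^ 2 := by
    rw [e1, derivative_C_mul, derivative_mul, h, hW, C_mul (a := 2)]
    ring
  rw [opT, e2, e1, derivative_C_mul, derivative_sq, h, C_mul (a := 2)]
  ring

noncomputable def legG (n m : ℕ) : ℚ[X] :=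
  ∑ k ∈ range m, C ((n.choose k * (n + k).choose k * (2 * k).choose k : ℕ) : ℚ) * (X + X ^ 2) ^ k

lemma legc_rec (n k : ℕ) : ((k : ℚ) + 1) ^ 3 * ((n.choose (k + 1) * (n + (k + 1)).choose (k + 1) * (2 * (k + 1)).choose (k + 1) : ℕ) : ℚ)
    = 2 * (2 * k + 1) * ((n : ℚ) * (n + 1) - k * (k + 1)) * ((n.choose k * (n + k).choose k * (2 * k).choose k : ℕ) : ℚ) := by
  have h1 := leg_rec n k
  have h2 := Nat.succ_mul_centralBinom_succ k
  simp only [Nat.centralBinom] at h2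
  have h2' : (((k+1) * (2 * (k+1)).choose (k+1) : ℕ) : ℚ) = ((2 * (2 * k + 1) * (2 * k).choose k : ℕ) : ℚ) := by rw [h2]
  rw [Nat.cast_mul _ ((2 * (k + 1)).choose (k + 1)), Nat.cast_mul _ ((2 * k).choose k)]
  rw [Nat.cast_mul, Nat.cast_mul (2 * (2 * k + 1))] at h2'
  push_cast at h2'
  calc _ = (((k : ℚ) + 1) ^ 2 * ((n.choose (k + 1) * (n + (k + 1)).choose (k + 1) : ℕ) : ℚ)) * (((k : ℚ) + 1) * ((2 * (k + 1)).choose (k + 1) : ℚ)) := by ring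
    _ = _ := by rw [h1, h2']; ring

lemma legG_op (n m : ℕ) : opT ((n : ℚ) * (n + 1)) (legG n (m + 1)) =
    - ((1 + 2 * X) * (C (((m : ℚ) + 1) ^ 3 * ((n.choose (m + 1) * (n + (m + 1)).choose (m + 1) * (2 * (m + 1)).choose (m + 1) : ℕ) : ℚ))
        * (X + X ^ 2) ^ m)) := by
  induction m with
  | zero =>
    rw [legc_rec]
    simp [legG, opT_one]
    ring
  | succ m ih =>
    rw [legG, Finset.sum_range_succ, ← legG, opT_add, ih, opT_smul, opT_pow, legc_rec n (m + 1)]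
    simp only [C_mul, map_pow, map_add, map_one, map_natCast, map_ofNat, map_sub, Nat.cast_add, Nat.cast_one]
    ring

lemma leg_sq (n : ℕ) : leg n ^ 2 = legG n (n + 1) := by
  have h : opT ((n : ℚ) * (n + 1)) (leg n ^ 2 - legG n (n + 1)) = 0 := by
    rw [opT_sub, leg_sq_op, legG_op, Nat.choose_eq_zero_of_lt (Nat.lt_succ_self n)]
    simp
  have := opT_unique _ _ h (by
    rw [coeff_zero_eq_eval_zero]
    simp [leg, legG, eval_finsetSum, Finset.sum_range_succ']
    )
  exact sub_eq_zero.mp this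

lemma leg_sq_K {K : Type*} [Field K] (n : ℕ) (y : K) :
    (∑ j ∈ range (n + 1), (n.choose j : K) * ((n + j).choose j : K) * y ^ j) ^ 2
      = ∑ k ∈ range (n + 1), (n.choose k : K) * ((n + k).choose k : K) * ((2 * k).choose k : K) * (y * (1 + y)) ^ k := by
  have hZ : (∑ j ∈ range (n + 1), C ((n.choose j * (n + j).choose j : ℕ) : ℤ) * X ^ j) ^ 2
      = ∑ k ∈ range (n + 1), C ((n.choose k * (n + k).choose k * (2 * k).choose k : ℕ) : ℤ) * (X + X ^ 2) ^ k := by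
    apply Polynomial.map_injective (Int.castRingHom ℚ) Int.cast_injective
    have := leg_sq n
    rw [leg, legG] at this
    simpa [Polynomial.map_sum] using this
  have := congrArg (Polynomial.eval₂ (Int.castRingHom K) y) hZ
  simp only [eval₂_pow, eval₂_finsetSum, eval₂_mul, eval₂_add, eval₂_C, eval₂_X] at this
  push_cast at this
  simp only [map_mul, map_natCast] at this
  rw [this]
  apply Finset.sum_congr rfl
  intro k _
  rw [show y + y ^ 2 = y * (1 + y) by ring]

end clausen

lemma three_fact (j : ℕ) : (2 * j).choose j * (3 * j).choose j * (j.factorial) ^ 3 = (3 * j).factorial := by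
  have h1 := Nat.choose_mul_factorial_mul_factorial (n := 2 * j) (k := j) (by omega)
  have h2 := Nat.choose_mul_factorial_mul_factorial (n := 3 * j) (k := j) (by omega)
  rw [show 2 * j - j = j by omega] at h1
  rw [show 3 * j - j = 2 * j by omega, ← h1] at h2
  rw [← h2]; ring

lemma three_rec (j : ℕ) : (j + 1) ^ 2 * ((2 * (j + 1)).choose (j + 1) * (3 * (j + 1)).choose (j + 1))
    = 3 * (3 * j + 1) * (3 * j + 2) * ((2 * j).choose j * (3 * j).choose j) := by
  have h1 := three_fact j
  have h2 := three_fact (j + 1)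
  have hf : (3 * (j + 1)).factorial = (3 * j + 3) * ((3 * j + 2) * ((3 * j + 1) * (3 * j).factorial)) := by
    rw [show 3 * (j + 1) = 3 * j + 1 + 1 + 1 by ring, Nat.factorial_succ, Nat.factorial_succ, Nat.factorial_succ]
  rw [hf, ← h1, Nat.factorial_succ] at h2
  have hpos : 0 < (j + 1) * j.factorial ^ 3 := by positivity
  apply Nat.eq_of_mul_eq_mul_right hpos
  linarith

lemma bc3 {K : Type*} [Field K] {p n1 : ℕ} [CharP K p] (h1 : (9 : K) * n1 * (n1 + 1) = -2) (j : ℕ) (hj : j < p) :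
    (n1.choose j : K) * ((n1 + j).choose j : K) * (-27) ^ j = ((2 * j).choose j : K) * ((3 * j).choose j : K) := by
  induction j with
  | zero => simp
  | succ j ih =>
    have ih := ih (by omega)
    have h2 := choose_rec (K := K) n1 j
    have h3 := choose_add_rec (K := K) n1 j
    have h4 : ((j : K) + 1) ≠ 0 := by exact_mod_cast cz_lt (K := K) (p := p) (Nat.succ_pos j) hj
    have h5 : (((j + 1) ^ 2 * ((2 * (j + 1)).choose (j + 1) * (3 * (j + 1)).choose (j + 1)) : ℕ) : K)
        = ((3 * (3 * j + 1) * (3 * j + 2) * ((2 * j).choose j * (3 * j).choose j) : ℕ) : K) := by rw [three_rec]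
    rw [Nat.cast_mul, Nat.cast_mul (3 * (3 * j + 1) * (3 * j + 2)), Nat.cast_mul ((2 * (j + 1)).choose (j + 1)), Nat.cast_mul ((2 * j).choose j)] at h5
    push_cast at h5
    apply mul_left_cancel₀ (pow_ne_zero 2 h4)
    rw [h5, ← ih]
    calc _ = (((j : K) + 1) * (n1.choose (j + 1) : K)) * (((j : K) + 1) * ((n1 + (j + 1)).choose (j + 1) : K)) * (-27) ^ (j + 1) := by ring
      _ = _ := by
        rw [h2, h3, pow_succ]
        linear_combination (-3) * ((n1.choose j : K) * ((n1 + j).choose j : K) * (-27) ^ j) * h1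

lemma sum_extend {K : Type*} [Field K] (a b : ℕ) (hab : a ≤ b) (f : ℕ → K) (hf : ∀ i, a ≤ i → i < b → f i = 0) :
    ∑ i ∈ range a, f i = ∑ i ∈ range b, f i := by
  apply Finset.sum_subset
  · intro x; simp; omega
  · intro x hb hx
    exact hf x (by simpa using hx) (by simpa using hb)

lemma step2 {K : Type*} [Field K] {p n : ℕ} [CharP K p] (hp : p = 2 * n + 1) (h2 : (2 : K) ≠ 0)
    (hp3 : p % 3 ≠ 0) (x : K) (hx : x * (1 - 27 * x) = 1 / 8) :
    ∑ j ∈ range p, (n.choose j : K) ^ 2 * ((3 * j).choose j : K) * 2 ^ j =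
    (∑ j ∈ range p, ((2 * j).choose j : K) * ((3 * j).choose j : K) * x ^ j) ^ 2 := by
  obtain ⟨n1, hn1⟩ : ∃ n1, p = 3 * n1 + 1 ∨ p = 3 * n1 + 2 := ⟨p / 3, by omega⟩
  have hc : (9 : K) * n1 * (n1 + 1) = -2 := by
    have h0 := CharP.cast_eq_zero K p
    rcases hn1 with h | h
    · rw [h] at h0; push_cast at h0
      linear_combination (3 * (n1 : K) + 2) * h0
    · rw [h] at h0; push_cast at h0
      linear_combination (3 * (n1 : K) + 1) * h0
  have hle : n1 + 1 ≤ p := by omega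
  have key := leg_sq_K n1 (-27 * x)
  rw [sum_extend (n1 + 1) p hle, sum_extend (n1 + 1) p hle] at key
  · have e1 : ∀ j ∈ range p, (n1.choose j : K) * ((n1 + j).choose j : K) * (-27 * x) ^ j
        = ((2 * j).choose j : K) * ((3 * j).choose j : K) * x ^ j := by
      intro j hj
      rw [← bc3 hc j (by simpa using hj), mul_pow]; ring
    rw [Finset.sum_congr rfl e1] at key
    rw [key]
    apply Finset.sum_congr rfl
    intro j hj
    have hj' : j < p := by simpa using hj
    have e2 := bc3 hc j hj'
    have e3 := central (K := K) hp j hj'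
    have e4 : (-27 * x) * (1 + -27 * x) = -27 * (1/8) := by rw [← hx]; ring
    have e5 : (-4 : K)^j * (-4)^j * (1/8)^j = 2 ^ j := by
      rw [← mul_pow, ← mul_pow]
      have h8 : (8 : K) ≠ 0 := by
        have : (8 : K) = 2 ^ 3 := by norm_num
        rw [this]; positivity
      congr 1
      field_simp; norm_num
    rw [e4, mul_pow]
    calc _ = (n.choose j : K)^2 * ((3 * j).choose j : K) * ((-4 : K)^j * (-4)^j * (1/8)^j) := by rw [e5]
      _ = (n.choose j * (-4 : K)^j) * ((n.choose j * (-4 : K)^j) * ((3 * j).choose j : K)) * (1/8)^j := by ring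
      _ = _ := by rw [← e3, ← e2]; ring
  · intro i hi _; rw [Nat.choose_eq_zero_of_lt (show n1 < i by omega)]; simp
  · intro i hi _; rw [Nat.choose_eq_zero_of_lt (show n1 < i by omega)]; simp

open Polynomial in
lemma hasse_three {K : Type*} [Field K] {p n : ℕ} [CharP K p] (hpp : p.Prime) (hp : p = 2 * n + 1) (x : K) :
    ∑ j ∈ range p, ((2 * j).choose j : K) * ((3 * j).choose j : K) * x ^ j
      = ((C 4 * X ^ 3 + (X + C x) ^ 2) ^ n : K[X]).coeff (2 * n) := by
  rw [add_pow, finsetSum_coeff]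
  rw [← sum_extend (n + 1) p (by omega)]
  · apply Finset.sum_congr rfl
    intro j hj
    have hj : j ≤ n := by simp at hj; omega
    have e0 : (C 4 * X ^ 3) ^ j * ((X + C x) ^ 2) ^ (n - j) * ((n.choose j : ℕ) : K[X])
        = C ((4 : K) ^ j * (n.choose j : K)) * (X ^ (3 * j) * (X + C x) ^ (2 * (n - j))) := by
      rw [mul_pow, ← pow_mul, ← pow_mul, C_mul, C_pow, C_eq_natCast]; ring
    rw [e0, coeff_C_mul, coeff_X_pow_mul', central hp j (by omega)]
    split_ifs with h
    · rw [coeff_X_add_C_pow, show 2 * (n - j) - (2 * n - 3 * j) = j by omega,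
        Nat.choose_symm_of_eq_add (show 2 * (n - j) = (2 * n - 3 * j) + j by omega),
        choose_refl (K := K) (p := p) (2 * j) (2 * (n - j)) (by omega) j (by omega), show 2 * j + j = 3 * j by ring]
      rw [show (-4 : K) = 4 * (-1) by ring, mul_pow]
      ring
    · rw [choose_three hpp (by omega) (by omega)]; simp
  · intro i hi hi2
    rw [central hp i hi2, Nat.choose_eq_zero_of_lt (show n < i by omega)]
    simp

open Polynomial in
lemma translate_coeff {K : Type*} [Field K] {p : ℕ} [CharP K p] (hpp : p.Prime) (f : K[X]) (hf : f.natDegree ≤ 2 * p - 2) (r : K) :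
    (f.comp (X + C r)).coeff (p - 1) = f.coeff (p - 1) := by
  rw [← taylor_apply, taylor_coeff, hasseDeriv_apply, sum_def, eval_finsetSum]
  rw [Finset.sum_eq_single (p - 1)]
  · simp
  · intro i hi hne
    have hi' : i ≤ 2 * p - 2 := le_trans (le_natDegree_of_mem_supp i hi) hf
    have : (i.choose (p - 1) : K) = 0 := by
      rcases lt_or_ge i (p - 1) with h | h
      · rw [Nat.choose_eq_zero_of_lt h]; simp
      · rw [CharP.cast_eq_zero_iff K p]
        have := hpp.pos
        have h5 := hpp.dvd_choose_add (a := p - 1) (b := i - (p - 1)) (by omega) (by omega) (by omega)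
        rwa [show p - 1 + (i - (p - 1)) = i by omega] at h5
    rw [this]; simp
  · intro h
    rw [notMem_support_iff] at h
    simp [h]

open Polynomial in
lemma hasse_two {K : Type*} [Field K] (n : ℕ) (d : K) (h2 : (2 : K) ≠ 0) :
    ((C 4 * ((X + C (-2 * d)) * (X ^ 2 + C (-2 * d ^ 2)))) ^ n : K[X]).coeff (2 * n)
      = 4 ^ n * (-2) ^ n * d ^ n * ∑ i ∈ range (n + 1), (n.choose i : K) * (n.choose (2 * i) : K) * (-1/2) ^ i := by
  have e : ((C 4 * ((X + C (-2 * d)) * (X ^ 2 + C (-2 * d ^ 2)))) ^ n : K[X])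
      = C (4 ^ n) * ∑ i ∈ range (n + 1), C ((-2 * d ^ 2) ^ i * (n.choose i : K)) * (X ^ (2 * (n - i)) * (X + C (-2 * d)) ^ n) := by
    rw [mul_pow, mul_pow, add_comm (X ^ 2), add_pow (C (-2 * d ^ 2)), C_pow, Finset.mul_sum]
    refine congrArg (fun z => C (4 : K) ^ n * z) (Finset.sum_congr rfl ?_)
    intro i _
    rw [C_mul (a := (-2 * d ^ 2) ^ i), C_pow, C_eq_natCast, ← pow_mul]
    generalize (X + C (-2 * d)) ^ n = z1
    generalize C (-2 * d ^ 2) ^ i = z2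
    ring
  rw [e, coeff_C_mul, finsetSum_coeff, mul_assoc, mul_assoc]
  refine congrArg (fun z => (4 : K) ^ n * z) ?_
  rw [Finset.mul_sum, Finset.mul_sum]
  apply Finset.sum_congr rfl
  intro i hi
  have hi : i ≤ n := by simp at hi; omega
  rw [coeff_C_mul, coeff_X_pow_mul', if_pos (by omega), coeff_X_add_C_pow, show 2 * n - 2 * (n - i) = 2 * i by omega]
  rcases le_or_gt (2 * i) n with h | h
  · obtain ⟨m, rfl⟩ : ∃ m, n = 2 * i + m := ⟨n - 2 * i, by omega⟩
    have e2 : (-2 : K)^i * (-1/2)^i = 1 := by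
      rw [← mul_pow]
      have : (-2 : K) * (-1/2) = 1 := by field_simp
      rw [this, one_pow]
    rw [show 2 * i + m - 2 * i = m by omega]
    generalize ((2 * i + m).choose i : K) = c1
    generalize ((2 * i + m).choose (2 * i) : K) = c2
    rw [mul_pow (-2 : K) (d ^ 2) i, mul_pow (-2 : K) d m, ← pow_mul d 2 i, pow_add (-2 : K) (2 * i) m, pow_add d (2 * i) m,
      show (-2 : K) ^ (2 * i) = (-2) ^ i * (-2) ^ i by rw [two_mul, pow_add]]
    generalize (-2 : K) ^ i = u at *
    generalize (-2 : K) ^ m = v at *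
    generalize (-1 / 2 : K) ^ i = w at *
    generalize d ^ (2 * i) = d1 at *
    generalize d ^ m = d2 at *
    linear_combination (-(c1 * c2 * u * v * d1 * d2)) * e2
  · rw [Nat.choose_eq_zero_of_lt h]; simp

lemma two_step {K : Type*} [Field K] {p n N : ℕ} [CharP K p] (h2 : (2 : K) ≠ 0) (hp : p = 2 * n + 1) (hN : N = n / 2) (i : ℕ) (hi : i ≤ N) :
    (n.choose i : K) * (n.choose (2 * i) : K) = (N.choose i : K) * ((N + i).choose i : K) := by
  have h0 := CharP.cast_eq_zero K p
  have hn : (n : K) = -1/2 := by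
    rw [hp] at h0; push_cast at h0
    field_simp; linear_combination h0
  have h16 : (16 : K) ≠ 0 := by
    have : (16 : K) = 2 ^ 4 := by norm_num
    rw [this]; positivity
  have hNN : (N : K) * (N + 1) = -3/16 := by
    rw [eq_div_iff h16]
    have : p = 4 * N + 1 ∨ p = 4 * N + 3 := by omega
    rcases this with h | h
    · rw [h] at h0; push_cast at h0
      linear_combination (4 * (N : K) + 3) * h0
    · rw [h] at h0; push_cast at h0
      linear_combination (4 * (N : K) + 1) * h0
  induction i with
  | zero => simp
  | succ i ih =>
    have ih := ih (by omega)
    have a1 := choose_rec (K := K) n i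
    have a2 := choose_rec (K := K) n (2 * i)
    have a3 := choose_rec (K := K) n (2 * i + 1)
    have b1 := choose_rec (K := K) N i
    have b2 := choose_add_rec (K := K) N i
    have c1 : ((i : K) + 1) ≠ 0 := by exact_mod_cast cz_lt (K := K) (p := p) (Nat.succ_pos i) (by omega)
    have c2 : (2 * (i : K) + 1) ≠ 0 := by exact_mod_cast cz_lt (K := K) (p := p) (Nat.succ_pos (2 * i)) (by omega)
    push_cast at a2 a3
    rw [show 2 * (i + 1) = 2 * i + 1 + 1 by ring]
    have hne : ((i : K) + 1) ^ 2 * (2 * (2 * i + 1)) ≠ 0 := mul_ne_zero (pow_ne_zero 2 c1) (mul_ne_zero h2 c2)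
    apply mul_left_cancel₀ hne
    calc _ = (((i : K) + 1) * (n.choose (i + 1) : K)) * ((2 * (i : K) + 1) * ((2 * (i : K) + 1 + 1) * (n.choose (2 * i + 1 + 1) : K))) := by ring
      _ = (((n : K) - i) * (n - (2 * i + 1)) * (n - 2 * i)) * ((n.choose i : K) * (n.choose (2 * i) : K)) := by
        rw [a1, a3]; linear_combination (n.choose i : K) * (n - i) * (n - (2 * i + 1)) * a2
      _ = (2 * (2 * i + 1) * ((N : K) * (N + 1) - i * (i + 1))) * ((N.choose i : K) * ((N + i).choose i : K)) := by
        rw [ih]; congr 1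
        rw [hn, hNN]
        have h8 : (8 : K) ≠ 0 := by
          have : (8 : K) = 2 ^ 3 := by norm_num
          rw [this]; positivity
        field_simp
        ring
      _ = (2 * (2 * i + 1)) * ((((i : K) + 1) * (N.choose (i + 1) : K)) * (((i : K) + 1) * ((N + (i + 1)).choose (i + 1) : K))) := by
        rw [b1, b2]; ring
      _ = _ := by ring

open Polynomial in
lemma leg_zero {K : Type*} [Field K] (h2 : (2 : K) ≠ 0) (N : ℕ) :
    ∑ i ∈ range (N + 1), (N.choose i : K) * ((N + i).choose i : K) * (-1/2) ^ i = (1/2) ^ N * ((1 - X ^ 2) ^ N : K[X]).coeff N := by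
  have h1 : C ((1/2 : K) ^ N) * (1 - X ^ 2) ^ N = (1 + X) ^ N * (C (-1/2 : K) * (1 + X) + 1) ^ N := by
    rw [C_pow, ← mul_pow, ← mul_pow]
    congr 1
    have e : C (-1/2 : K) = - C (1/2 : K) := by rw [← C_neg]; congr 1; ring
    have e2 : C (1/2 : K) + C (1/2 : K) = 1 := by
      rw [← C_add, show (1/2 + 1/2 : K) = 1 by field_simp; norm_num, C_1]
    rw [e]
    linear_combination (1 + X) * e2
  rw [← coeff_C_mul, h1, add_pow (C (-1/2 : K) * (1 + X)), Finset.mul_sum, finsetSum_coeff]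
  apply Finset.sum_congr rfl
  intro i _
  have : (1 + X) ^ N * ((C (-1/2 : K) * (1 + X)) ^ i * 1 ^ (N - i) * ((N.choose i : ℕ) : K[X]))
      = C ((-1/2 : K) ^ i * (N.choose i : K)) * (1 + X) ^ (N + i) := by
    rw [C_mul, C_pow, C_eq_natCast, mul_pow, pow_add]
    generalize C (-1/2 : K) ^ i = z1
    ring
  rw [this, coeff_C_mul, coeff_one_add_X_pow, Nat.choose_symm_add]
  ring

open Polynomial in
lemma coeff_odd {K : Type*} [Field K] (N : ℕ) (hN : N % 2 = 1) : ((1 - X ^ 2) ^ N : K[X]).coeff N = 0 := by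
  have : ((1 - X ^ 2) ^ N : K[X]) = expand K 2 ((1 - X) ^ N) := by simp
  rw [this, coeff_expand (by norm_num), if_neg (by omega)]

open Polynomial in
lemma coeff_even {K : Type*} [Field K] (k : ℕ) : ((1 - X ^ 2) ^ (2 * k) : K[X]).coeff (2 * k) = (-1) ^ k * ((2 * k).choose k : K) := by
  have : ((1 - X ^ 2) ^ (2 * k) : K[X]) = expand K 2 ((X + C (-1)) ^ (2 * k)) := by
    simp only [map_pow, expand_X, map_add, C_neg, C_1, map_one, map_neg]
    rw [← sub_eq_add_neg]
    rw [← neg_sub (X ^ 2 : K[X]) 1, Even.neg_pow (even_two_mul k)]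
  rw [this, coeff_expand (by norm_num), if_pos (by omega), show 2 * k / 2 = k by omega, coeff_X_add_C_pow,
    show 2 * k - k = k by omega]

open Polynomial in
/-- The sum is `d^(p-1)` times the square of an explicit element. -/
lemma main_sum {K : Type*} [Field K] {p n N : ℕ} [CharP K p] (hpp : p.Prime) (hp3 : 3 < p) (hp : p = 2 * n + 1) (hN : N = n / 2)
    (s : K) (hs : s ^ 2 = -2) :
    ∃ d : K, d ≠ 0 ∧ ∑ m ∈ range p, (A m : K) / 8 ^ m = d ^ (p - 1) * ((1/4) ^ N * (((1 - X ^ 2) ^ N : K[X]).coeff N) ^ 2) := by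
  have h2 : (2 : K) ≠ 0 := by exact_mod_cast cz_lt (K := K) (p := p) (i := 2) (by norm_num) (by omega)
  have h3 : (3 : K) ≠ 0 := by exact_mod_cast cz_lt (K := K) (p := p) (i := 3) (by norm_num) (by omega)
  have hpm3 : p % 3 ≠ 0 := by
    intro h
    have := (Nat.prime_dvd_prime_iff_eq Nat.prime_three hpp).mp (Nat.dvd_of_mod_eq_zero h)
    omega
  have h2p : (2 : K) ^ (p - 1) = 1 := by
    have : Fact p.Prime := ⟨hpp⟩
    have e : (2 : ZMod p) ≠ 0 := by exact_mod_cast cz_lt (K := ZMod p) (p := p) (i := 2) (by norm_num) (by omega)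
    have := congrArg (ZMod.castHom (dvd_refl p) K) (ZMod.pow_card_sub_one_eq_one e)
    rw [map_pow, map_ofNat, map_one] at this; exact this
  have h12 : (12 : K) ≠ 0 := by
    have : (12 : K) = 2 ^ 2 * 3 := by norm_num
    rw [this]; positivity
  have h108 : (108 : K) ≠ 0 := by
    have : (108 : K) = 2 ^ 2 * 3 ^ 3 := by norm_num
    rw [this]; positivity
  have h36 : (36 : K) ≠ 0 := by
    have : (36 : K) = 2 ^ 2 * 3 ^ 2 := by norm_num
    rw [this]; positivity
  have h24 : (24 : K) ≠ 0 := by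
    have : (24 : K) = 2 ^ 3 * 3 := by norm_num
    rw [this]; positivity
  have h8 : (8 : K) ≠ 0 := by
    have : (8 : K) = 2 ^ 3 := by norm_num
    rw [this]; positivity
  obtain ⟨i, hi⟩ : ∃ i : K, 216 * i = 1 := ⟨1/216, by
    have : (216 : K) ≠ 0 := by
      have : (216 : K) = 2 ^ 3 * 3 ^ 3 := by norm_num
      rw [this]; positivity
    field_simp⟩
  set x : K := i * (4 + 10 * s) with hx
  set d : K := i * (18 - 9 * s) with hd
  set r : K := i * (6 * s - 30) with hr
  have hxe : x * (1 - 27 * x) = 1 / 8 := by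
    rw [eq_div_iff h8, hx]
    linear_combination (-21600 * i^2) * hs + (1 - i*(80*s-184)) * hi
  have c1 : 12 * r + 1 = -8 * d := by rw [hr, hd]; linear_combination (-1) * hi
  have c2 : 12 * r ^ 2 + 2 * (r + x) = -8 * d ^ 2 := by
    rw [hr, hd, hx]; linear_combination (1080*i^2)*hs + i*(52-32*s)*hi
  have c3 : 4 * r ^ 3 + (r + x) ^ 2 = 16 * d ^ 3 := by
    rw [hr, hd, hx]; linear_combination (i^3*(12528*s-82944) + 256*i^2)*hs + i^2*(832*s-164)*hi
  have hd0 : d ≠ 0 := by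
    intro h
    have : (d * (i * (18 + 9 * s))) * 96  = 1 := by
      rw [hd]; linear_combination (-81*96*i^2)*hs + (216*i+1)*hi
    rw [h] at this; simp at this
  clear_value x d r
  refine ⟨d, hd0, ?_⟩
  rw [step1 hpp hp h2 h2p, step2 hp h2 hpm3 x hxe, hasse_three hpp hp]
  have hcomp : ((C 4 * X ^ 3 + (X + C x) ^ 2) ^ n : K[X]).comp (X + C r) = (C 4 * ((X + C (-2 * d)) * (X ^ 2 + C (-2 * d ^ 2)))) ^ n := by
    rw [pow_comp]
    congr 1
    have c1' := congrArg (C : K → K[X]) c1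
    have c2' := congrArg (C : K → K[X]) c2
    have c3' := congrArg (C : K → K[X]) c3
    simp only [C_mul, C_add, C_pow, C_neg, map_ofNat, C_1] at c1' c2' c3'
    simp only [add_comp, mul_comp, pow_comp, C_comp, X_comp]
    simp only [C_mul, C_pow, C_neg, map_ofNat]
    linear_combination X ^ 2 * c1' + X * c2' + c3'
  have htr := translate_coeff (K := K) (p := p) hpp ((C 4 * X ^ 3 + (X + C x) ^ 2) ^ n : K[X]) (by
    refine le_trans natDegree_pow_le ?_
    have : (C 4 * X ^ 3 + (X + C x) ^ 2 : K[X]).natDegree ≤ 3 := by compute_degree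
    calc _ ≤ n * 3 := Nat.mul_le_mul_left _ this
      _ ≤ _ := by omega) r
  rw [show p - 1 = 2 * n by omega] at htr h2p ⊢
  rw [← htr, hcomp, hasse_two n d h2, ← sum_extend (N + 1) (n + 1) (by omega)]
  · have e1 : ∀ j ∈ range (N + 1), (n.choose j : K) * (n.choose (2 * j) : K) * (-1/2) ^ j = (N.choose j : K) * ((N + j).choose j : K) * (-1/2) ^ j := by
      intro j hj
      rw [two_step h2 hp hN j (by simp at hj; omega)]
    rw [Finset.sum_congr rfl e1, leg_zero h2]
    have e2 : (4 : K) ^ n = 1 := by rw [← h2p, pow_mul]; norm_num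
    have e3 : ((-2 : K) ^ n) ^ 2 = 1 := by rw [← e2, ← pow_mul, mul_comm, pow_mul]; norm_num
    have e4 : ((1/2 : K) ^ N) ^ 2 = (1/4) ^ N := by
      rw [← pow_mul, mul_comm, pow_mul, div_pow]; norm_num
    rw [mul_pow, mul_pow, mul_pow, mul_pow, e2, e3, e4, ← pow_mul, mul_comm n 2]
    ring
  · intro j hj _
    rw [Nat.choose_eq_zero_of_lt (show n < 2 * j by omega)]; simp

lemma sum_zero (p : ℕ) [Fact p.Prime] (h : p % 8 = 5 ∨ p % 8 = 7) :
    (∑ n ∈ Finset.range p, (A n : ZMod p) / (8 : ZMod p) ^ n) = 0 := by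
  have hpp : p.Prime := Fact.out
  obtain ⟨n, hn⟩ : ∃ n, p = 2 * n + 1 := ⟨p / 2, by omega⟩
  let K := AlgebraicClosure (ZMod p)
  have : CharP K p := charP_of_injective_algebraMap (algebraMap (ZMod p) K).injective p
  obtain ⟨s, hs⟩ := IsAlgClosed.exists_pow_nat_eq (-2 : K) (n := 2) (by norm_num)
  obtain ⟨d, _, hS⟩ := main_sum (K := K) (p := p) (n := n) (N := n / 2) hpp (by omega) hn rfl s hs
  rw [coeff_odd _ (by omega)] at hS
  apply (algebraMap (ZMod p) K).injective
  rw [map_sum, map_zero]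
  simp only [map_div₀, map_pow, map_natCast, map_ofNat]
  rw [hS]; ring

lemma sum_binom (p n k : ℕ) [Fact p.Prime] (hp3 : 3 < p) (h : p % 8 = 1 ∨ p % 8 = 3) (hn : p = 2 * n + 1) (hk : k = p / 8) :
    (∑ m ∈ Finset.range p, (A m : ZMod p) / (8 : ZMod p) ^ m) = (n.choose k : ZMod p) ^ 2 := by
  have hpp : p.Prime := Fact.out
  obtain ⟨s, hs⟩ := (ZMod.exists_sq_eq_neg_two_iff (p := p) (by omega)).mpr h
  have h2 : (2 : ZMod p) ≠ 0 := by exact_mod_cast cz_lt (K := ZMod p) (p := p) (i := 2) (by norm_num) (by omega)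
  obtain ⟨d, hd, hS⟩ := main_sum (K := ZMod p) (p := p) (n := n) (N := 2 * k) hpp hp3 hn (by omega) s (by rw [hs]; ring)
  rw [hS, ZMod.pow_card_sub_one_eq_one hd, coeff_even, central hn k (by omega)]
  have e1 : ((-1 : ZMod p) ^ k) ^ 2 = 1 := by rw [← pow_mul, mul_comm, pow_mul]; simp
  have e2 : (1 / 4 : ZMod p) ^ (2 * k) * ((-4) ^ k) ^ 2 = 1 := by
    rw [← pow_mul, mul_comm k 2, ← mul_pow]
    have h4 : (4 : ZMod p) ≠ 0 := by
      rw [show (4 : ZMod p) = 2 ^ 2 by norm_num]; exact pow_ne_zero 2 h2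
    rw [show (1 / 4 : ZMod p) * (-4) = -1 by field_simp, pow_mul]; simp
  linear_combination ((1 / 4 : ZMod p) ^ (2 * k) * ((-4) ^ k) ^ 2 * (n.choose k : ZMod p) ^ 2) * e1 + (n.choose k : ZMod p) ^ 2 * e2

lemma sym_eval {R : Type*} [CommRing R] (z : R) (hz : z ^ 4 = -1) (e : ℕ) :
    z ^ e + z ^ (3 * e) = 2 * ((if e % 8 = 0 then 1 else if e % 8 = 4 then -1 else 0 : ℤ) : R)
      + ((if e % 8 = 1 ∨ e % 8 = 3 then 1 else if e % 8 = 5 ∨ e % 8 = 7 then -1 else 0 : ℤ) : R) * (z + z ^ 3) := by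
  have h8 : z ^ 8 = 1 := by linear_combination (z ^ 4 - 1) * hz
  have key : z ^ e + z ^ (3 * e) = z ^ (e % 8) + (z ^ (e % 8)) ^ 3 := by
    have : z ^ e = z ^ (e % 8) := by
      conv_lhs => rw [← Nat.div_add_mod e 8, pow_add, pow_mul, h8, one_pow, one_mul]
    rw [mul_comm 3 e, pow_mul, this]
  rw [key]
  have hlt : e % 8 < 8 := Nat.mod_lt _ (by norm_num)
  generalize e % 8 = r at *
  interval_cases r
  · norm_num
  · norm_num
  · norm_num; linear_combination (z ^ 2) * hz
  · norm_num; linear_combination (z ^ 5 - z) * hz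
  · norm_num; linear_combination (z ^ 8 - z ^ 4 + 2) * hz
  · norm_num; linear_combination (z + z ^ 11 - z ^ 7 + z ^ 3) * hz
  · norm_num; linear_combination (z ^ 14 - z ^ 10 + z ^ 6) * hz
  · norm_num; linear_combination (z ^ 3 + z ^ 17 - z ^ 13 + z ^ 9 - z ^ 5 + z) * hz

lemma jac_uv (F : Type) [Field F] [Fintype F] [DecidableEq F] (g : Fˣ) (hg : ∀ x, x ∈ Subgroup.zpowers g) :
    ∃ u V : ℤ, ∀ (R : Type) [CommRing R] (χ : F →* R), χ g ^ 4 = -1 →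
      2 * ∑ t ∈ univ \ {0, 1}, χ t * χ (1 - t) ^ 3 = 2 * (u : R) + V * (χ g + χ g ^ 3) := by
  have hl : ∀ t : F, ∃ l : ℕ, t ≠ 0 → t = (g : F) ^ l := by
    intro t
    by_cases ht : t = 0
    · exact ⟨0, fun h => absurd ht h⟩
    · have := hg (Units.mk0 t ht)
      rw [← mem_powers_iff_mem_zpowers] at this
      obtain ⟨l, hl⟩ := this
      refine ⟨l, fun _ => ?_⟩
      have := congrArg (fun x : Fˣ => (x : F)) hl
      simpa using this.symm
  choose l hl using hl
  let e : F → ℕ := fun t => l t + 3 * l (1 - t)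
  refine ⟨∑ t ∈ univ \ {0, 1}, (if e t % 8 = 0 then 1 else if e t % 8 = 4 then -1 else 0 : ℤ),
    ∑ t ∈ univ \ {0, 1}, (if e t % 8 = 1 ∨ e t % 8 = 3 then 1 else if e t % 8 = 5 ∨ e t % 8 = 7 then -1 else 0 : ℤ), ?_⟩
  intro R _ χ hχ
  have h8 : χ g ^ 8 = 1 := by linear_combination (χ g ^ 4 - 1) * hχ
  have h1 : ∑ t ∈ univ \ {0, 1}, χ t * χ (1 - t) ^ 3 = ∑ t ∈ univ \ {0, 1}, χ g ^ (e t) := by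
    apply Finset.sum_congr rfl
    intro t ht
    simp at ht
    have a1 := hl t ht.1
    have a2 := hl (1 - t) (sub_ne_zero.mpr (Ne.symm ht.2))
    have b1 := congrArg χ a1
    have b2 := congrArg χ a2
    rw [map_pow] at b1 b2
    rw [b1, b2]
    simp only [e]
    ring
  have h2 : ∑ t ∈ univ \ {0, 1}, χ t * χ (1 - t) ^ 3 = ∑ t ∈ univ \ {0, 1}, χ g ^ (3 * e t) := by
    rw [h1]
    refine Finset.sum_bij' (fun t _ => 1 - t) (fun t _ => 1 - t) ?_ ?_ ?_ ?_ ?_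
    · intro t ht
      simp at ht ⊢
      exact ⟨sub_ne_zero.mpr (Ne.symm ht.2), ht.1⟩
    · intro t ht
      simp at ht ⊢
      exact ⟨sub_ne_zero.mpr (Ne.symm ht.2), ht.1⟩
    · intro t _; ring
    · intro t _; ring
    · intro t _
      simp only [e, sub_sub_cancel]
      rw [show 3 * (l (1 - t) + 3 * l t) = (l t + 3 * l (1 - t)) + 8 * l t by ring, pow_add _ _ (8 * l t), pow_mul _ 8, h8]
      simp
  calc 2 * ∑ t ∈ univ \ {0, 1}, χ t * χ (1 - t) ^ 3
      = ∑ t ∈ univ \ {0, 1}, (χ g ^ (e t) + χ g ^ (3 * e t)) := by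
        rw [Finset.sum_add_distrib, ← h1, ← h2]; ring
    _ = _ := by
        rw [Finset.sum_congr rfl (fun t _ => sym_eval (χ g) hχ (e t)), Finset.sum_add_distrib, ← Finset.mul_sum, ← Finset.sum_mul]
        push_cast
        rfl

lemma sum_pow_ff (F : Type) [Field F] [Fintype F] (i : ℕ) (h0 : 0 < i) (hi : i < 2 * (Fintype.card F - 1)) :
    ∑ x : F, x ^ i = if i = Fintype.card F - 1 then -1 else 0 := by
  classical
  rcases lt_trichotomy i (Fintype.card F - 1) with h | h | h
  · rw [FiniteField.sum_pow_lt_card_sub_one F i h, if_neg (by omega)]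
  · rw [if_pos h, h]
    have : ∀ x : F, x ^ (Fintype.card F - 1) = 1 - (if x = 0 then 1 else 0) := by
      intro x
      split_ifs with hx
      · rw [hx, zero_pow (by omega)]; simp
      · rw [FiniteField.pow_card_sub_one_eq_one x hx]; simp
    rw [Finset.sum_congr rfl (fun x _ => this x), Finset.sum_sub_distrib]
    simp
  · rw [if_neg (by omega), ← FiniteField.sum_pow_lt_card_sub_one F (i - (Fintype.card F - 1)) (by omega)]
    apply Finset.sum_congr rfl
    intro x _
    by_cases hx : x = 0
    · rw [hx, zero_pow (by omega), zero_pow (by omega)]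
    · conv_lhs => rw [show i = (i - (Fintype.card F - 1)) + (Fintype.card F - 1) by omega, pow_add, FiniteField.pow_card_sub_one_eq_one x hx, mul_one]

lemma sum_beta (F : Type) [Field F] [Fintype F] (a b : ℕ) (h0 : 0 < a) (h : a + b < 2 * (Fintype.card F - 1))
    (ha : a ≤ Fintype.card F - 1) :
    ∑ t : F, t ^ a * (1 - t) ^ b = - ((-1) ^ (Fintype.card F - 1 - a) * (b.choose (Fintype.card F - 1 - a) : F)) := by
  set Q := Fintype.card F - 1 with hQ
  have h1 : ∀ t : F, t ^ a * (1 - t) ^ b = ∑ i ∈ range (b + 1), ((-1) ^ i * (b.choose i : F)) * t ^ (a + i) := by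
    intro t
    rw [show (1 - t) = -t + 1 by ring, add_pow, Finset.mul_sum]
    apply Finset.sum_congr rfl
    intro i _
    rw [neg_pow, pow_add]; ring
  rw [Finset.sum_congr rfl (fun t _ => h1 t), Finset.sum_comm]
  have h2 : ∀ i ∈ range (b + 1), ∑ t : F, ((-1) ^ i * (b.choose i : F)) * t ^ (a + i)
      = if i = Q - a then - ((-1) ^ i * (b.choose i : F)) else 0 := by
    intro i hi
    simp at hi
    rw [← Finset.mul_sum, sum_pow_ff F (a + i) (by omega) (by omega)]
    by_cases hh : i = Q - a
    · rw [if_pos hh, if_pos (by omega)]; ring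
    · rw [if_neg hh, if_neg (by omega)]; ring
  rw [Finset.sum_congr rfl h2, Finset.sum_ite_eq']
  split_ifs with hh
  · rfl
  · simp at hh
    rw [Nat.choose_eq_zero_of_lt (by omega)]; simp

lemma jac_complex (F : Type) [Field F] [Fintype F] [DecidableEq F] (m : ℕ) (hq : Fintype.card F = 8 * m + 1)
    (g : Fˣ) (hg : ∀ x, x ∈ Subgroup.zpowers g) (u V : ℤ)
    (H : ∀ (R : Type) [CommRing R] (χ : F →* R), χ g ^ 4 = -1 →
      2 * ∑ t ∈ univ \ {0, 1}, χ t * χ (1 - t) ^ 3 = 2 * (u : R) + V * (χ g + χ g ^ 3)) :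
    (2 * u) ^ 2 + 2 * V ^ 2 = 4 * (Fintype.card F : ℤ) := by
  have hz : IsPrimitiveRoot (Complex.exp (2 * Real.pi * Complex.I / (8 : ℕ))) 8 := Complex.isPrimitiveRoot_exp 8 (by norm_num)
  set z := Complex.exp (2 * Real.pi * Complex.I / (8 : ℕ)) with hzdef
  clear_value z
  have hz8 := hz.pow_eq_one
  have hz4 : z ^ 4 = -1 := by
    have h1 : (z ^ 4 - 1) * (z ^ 4 + 1) = 0 := by linear_combination hz8
    rcases mul_eq_zero.mp h1 with h | h
    · exact absurd (sub_eq_zero.mp h) (hz.pow_ne_one_of_pos_of_lt (by norm_num) (by norm_num))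
    · linear_combination h
  have hz0 : z ≠ 0 := hz.ne_zero (by norm_num)
  let zu : ℂˣ := Units.mk0 z hz0
  have hzu : zu ∈ rootsOfUnity (Fintype.card Fˣ) ℂ := by
    rw [mem_rootsOfUnity, Fintype.card_units, hq, show 8 * m + 1 - 1 = 8 * m by omega]
    ext
    simp [zu, pow_mul, hz8]
  let χ : MulChar F ℂ := MulChar.ofRootOfUnity hzu hg
  have hχg : χ g = z := MulChar.ofRootOfUnity_spec hzu hg
  have hχg' : χ⁻¹ g = - z ^ 3 := by
    rw [MulChar.inv_apply_eq_inv', hχg]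
    apply inv_eq_of_mul_eq_one_right
    linear_combination -hz4
  have n1 : χ ≠ 1 := by
    intro h
    rw [h, MulChar.one_apply_coe] at hχg
    exact hz.pow_ne_one_of_pos_of_lt (l := 1) (by norm_num) (by norm_num) (by rw [← hχg, one_pow])
  have n3 : χ ^ 3 ≠ 1 := by
    intro h
    have : (χ ^ 3) g = z ^ 3 := by rw [MulChar.pow_apply_coe, hχg]
    rw [h, MulChar.one_apply_coe] at this
    exact hz.pow_ne_one_of_pos_of_lt (l := 3) (by norm_num) (by norm_num) this.symm
  have n4 : χ * χ ^ 3 ≠ 1 := by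
    intro h
    have : (χ * χ ^ 3) g = z * z ^ 3 := by rw [MulChar.mul_apply, MulChar.pow_apply_coe, hχg]
    rw [h, MulChar.one_apply_coe] at this
    exact hz.pow_ne_one_of_pos_of_lt (l := 4) (by norm_num) (by norm_num) (by rw [this]; ring)
  have hchar : ringChar ℂ ≠ ringChar F := by
    rw [ringChar.eq_zero]
    exact (CharP.ringChar_ne_zero_of_finite F).symm
  have hJ := jacobiSum_mul_jacobiSum_inv hchar n1 n3 n4
  have J1 : 2 * jacobiSum χ (χ ^ 3) = 2 * (u : ℂ) + V * (z + z ^ 3) := by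
    have := H ℂ χ.toMonoidHom (by change χ g ^ 4 = -1; rw [hχg, hz4])
    change 2 * ∑ t ∈ univ \ {0, 1}, χ t * χ (1 - t) ^ 3 = 2 * (u : ℂ) + V * (χ g + χ g ^ 3) at this
    rw [hχg] at this
    rw [jacobiSum_eq_sum_sdiff, ← this]
    simp only [MulChar.pow_apply' χ (show 3 ≠ 0 by norm_num)]
  have J2 : 2 * jacobiSum χ⁻¹ (χ ^ 3)⁻¹ = 2 * (u : ℂ) - V * (z + z ^ 3) := by
    have := H ℂ χ⁻¹.toMonoidHom (by change χ⁻¹ g ^ 4 = -1; rw [hχg']; linear_combination (z ^ 8 - z ^ 4 + 1) * hz4)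
    change 2 * ∑ t ∈ univ \ {0, 1}, χ⁻¹ t * χ⁻¹ (1 - t) ^ 3 = 2 * (u : ℂ) + V * (χ⁻¹ g + χ⁻¹ g ^ 3) at this
    rw [hχg'] at this
    rw [jacobiSum_eq_sum_sdiff, ← inv_pow]
    simp only [MulChar.pow_apply' χ⁻¹ (show 3 ≠ 0 by norm_num)]
    rw [this]
    linear_combination (V * (-z ^ 5 + z)) * hz4
  have : (((2 * u) ^ 2 + 2 * V ^ 2 : ℤ) : ℂ) = ((4 * (Fintype.card F : ℤ) : ℤ) : ℂ) := by
    push_cast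
    rw [← hJ]
    calc _ = (2 * (u : ℂ) + V * (z + z ^ 3)) * (2 * (u : ℂ) - V * (z + z ^ 3)) := by
          linear_combination (V ^ 2 * (z ^ 2 + 2)) * hz4
      _ = _ := by rw [← J1, ← J2]; ring
  exact_mod_cast this

lemma jac_main (F : Type) [Field F] [Fintype F] (m : ℕ) (hm : 0 < m) (hq : Fintype.card F = 8 * m + 1) (h2 : (2 : F) ≠ 0) :
    ∃ u v : ℤ, u ^ 2 + 2 * v ^ 2 = (Fintype.card F : ℤ) ∧ (2 * (u : F)) ^ 2 = ((5 * m).choose m : F) ^ 2 := by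
  classical
  obtain ⟨g, hg⟩ := IsCyclic.exists_generator (α := Fˣ)
  obtain ⟨u, V, H⟩ := jac_uv F g hg
  have hc := jac_complex F m hq g hg u V H
  have hV : Even V := by
    have : Even (V ^ 2) := ⟨(Fintype.card F : ℤ) - u ^ 2, by linarith⟩
    exact (Int.even_pow.mp this).1
  obtain ⟨v, rfl⟩ := hV
  refine ⟨u, v, by linarith, ?_⟩
  have hord : orderOf g = 8 * m := by
    rw [orderOf_eq_card_of_forall_mem_zpowers hg, Nat.card_eq_fintype_card, Fintype.card_units, hq]; omega
  have hordF : orderOf (g : F) = 8 * m := by rw [orderOf_units, hord]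
  have g8 : (g : F) ^ (8 * m) = 1 := by rw [← hordF]; exact pow_orderOf_eq_one _
  have g4 : (g : F) ^ (4 * m) ≠ 1 := pow_ne_one_of_lt_orderOf (by omega) (by omega)
  set w := (g : F) ^ m with hw
  have w8 : w ^ 8 = 1 := by rw [hw, ← pow_mul, mul_comm m 8, g8]
  have w4 : w ^ 4 = -1 := by
    have h1 : (w ^ 4 - 1) * (w ^ 4 + 1) = 0 := by linear_combination w8
    rcases mul_eq_zero.mp h1 with h | h
    · exact absurd (by rw [mul_comm 4 m, pow_mul]; exact sub_eq_zero.mp h) g4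
    · linear_combination h
  have H1 := H F (powMonoidHom m) (by change w ^ 4 = -1; exact w4)
  have H7 := H F (powMonoidHom (7 * m)) (by
    change ((g : F) ^ (7 * m)) ^ 4 = -1
    rw [mul_comm 7 m, pow_mul, ← hw]
    linear_combination (w ^ 24 - w ^ 20 + w ^ 16 - w ^ 12 + w ^ 8 - w ^ 4 + 1) * w4)
  change 2 * ∑ t ∈ univ \ {0, 1}, t ^ m * ((1 - t) ^ m) ^ 3 = 2 * (u : F) + ((v + v : ℤ) : F) * (w + w ^ 3) at H1
  change 2 * ∑ t ∈ univ \ {0, 1}, t ^ (7 * m) * ((1 - t) ^ (7 * m)) ^ 3 = 2 * (u : F) + ((v + v : ℤ) : F) * ((g : F) ^ (7 * m) + ((g : F) ^ (7 * m)) ^ 3) at H7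
  rw [mul_comm 7 m, pow_mul (g : F), ← hw, mul_comm m 7] at H7
  have S1 : ∑ t ∈ univ \ {0, 1}, t ^ m * ((1 - t) ^ m) ^ 3 = (0 : F) := by
    have e := sum_beta F m (3 * m) hm (by omega) (by omega)
    rw [Nat.choose_eq_zero_of_lt (by omega)] at e
    simp only [Nat.cast_zero, mul_zero, neg_zero] at e
    refine Eq.trans ?_ e
    refine Eq.trans (Finset.sum_subset (Finset.subset_univ _) ?_) ?_
    · intro x _ hx
      simp at hx
      by_cases h : x = 0
      · rw [h, zero_pow (by omega), zero_mul]
      · rw [hx h, sub_self, zero_pow (by omega)]; simp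
    · apply Finset.sum_congr rfl
      intro t _
      rw [← pow_mul, mul_comm m 3]
  have S7 : ∑ t ∈ univ \ {0, 1}, t ^ (7 * m) * ((1 - t) ^ (7 * m)) ^ 3 = - ((-1) ^ m * ((5 * m).choose m : F)) := by
    have e := sum_beta F (7 * m) (5 * m) (by omega) (by omega) (by omega)
    rw [show Fintype.card F - 1 - 7 * m = m by omega] at e
    rw [← e]
    refine Eq.trans (Finset.sum_subset (Finset.subset_univ _) ?_) ?_
    · intro x _ hx
      simp at hx
      by_cases h : x = 0
      · rw [h, zero_pow (by omega), zero_mul]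
      · rw [hx h, sub_self, zero_pow (by omega)]; simp
    · apply Finset.sum_congr rfl
      intro t _
      congr 1
      by_cases h : 1 - t = 0
      · rw [h, zero_pow (by omega), zero_pow (by omega), zero_pow (by omega)]
      · have := FiniteField.pow_card_sub_one_eq_one (1 - t) h
        rw [show Fintype.card F - 1 = 8 * m by omega] at this
        rw [← pow_mul, show 7 * m * 3 = 5 * m + 8 * m * 2 by ring, pow_add, pow_mul _ (8 * m), this]; simp
  rw [S1] at H1
  rw [S7] at H7
  have fin : 2 * (u : F) = - ((-1) ^ m * ((5 * m).choose m : F)) := by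
    apply mul_left_cancel₀ h2
    rw [H7]
    push_cast at H1 ⊢
    have t : (w ^ 7 + (w ^ 7) ^ 3) = - (w + w ^ 3) := by
      linear_combination (w ^ 3 + w ^ 17 - w ^ 13 + w ^ 9 - w ^ 5 + w) * w4
    rw [t]
    linear_combination (-1) * H1
  rw [fin, neg_sq, mul_pow, ← pow_mul, mul_comm m 2, pow_mul]
  simp

lemma rep_unique (p : ℕ) (hpp : p.Prime) (x y u v : ℤ) (h1 : (p : ℤ) = x ^ 2 + 2 * y ^ 2) (h2 : (p : ℤ) = u ^ 2 + 2 * v ^ 2) :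
    x ^ 2 = u ^ 2 := by
  have hp0 : (0 : ℤ) < p := by exact_mod_cast hpp.pos
  have hprime : Prime (p : ℤ) := Nat.prime_iff_prime_int.mp hpp
  have aux : ∀ v : ℤ, (p : ℤ) = u ^ 2 + 2 * v ^ 2 → (p : ℤ) ∣ x * v - u * y → x ^ 2 = u ^ 2 := by
    intro v h2 ⟨c, hc⟩
    have h3 : (p : ℤ) ^ 2 = (x * u + 2 * y * v) ^ 2 + 2 * (x * v - u * y) ^ 2 := by
      calc (p : ℤ) ^ 2 = (x ^ 2 + 2 * y ^ 2) * (u ^ 2 + 2 * v ^ 2) := by rw [← h1, ← h2]; ring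
        _ = _ := by ring
    have hc0 : c = 0 := by
      by_contra hne
      have : 1 ≤ c ^ 2 := by
        have := sq_pos_of_ne_zero hne
        omega
      rw [hc] at h3
      nlinarith [sq_nonneg (x * u + 2 * y * v), sq_pos_of_pos hp0]
    rw [hc0, mul_zero] at hc
    have e : (p : ℤ) * (v ^ 2 - y ^ 2) = 0 := by
      have : x ^ 2 * v ^ 2 = u ^ 2 * y ^ 2 := by linear_combination (x * v + u * y) * hc
      linear_combination v ^ 2 * h1 - y ^ 2 * h2 + this
    rcases mul_eq_zero.mp e with h | h
    · omega
    · linarith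
  have hd : (p : ℤ) ∣ (x * v - u * y) * (x * v + u * y) := ⟨v ^ 2 - y ^ 2, by linear_combination -v ^ 2 * h1 + y ^ 2 * h2⟩
  rcases hprime.dvd_or_dvd hd with h | h
  · exact aux v h2 h
  · refine aux (-v) (by rw [h2]; ring) ?_
    have := (dvd_neg (a := (p : ℤ))).mpr h
    rwa [show x * -v - u * y = -(x * v + u * y) by ring]

lemma rep_of_sq (p : ℕ) (hpp : p.Prime) (hodd : p % 2 = 1) (u v : ℤ) (h : u ^ 2 + 2 * v ^ 2 = (p : ℤ) ^ 2) (hv : v ≠ 0) :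
    ∃ x y : ℤ, (p : ℤ) = x ^ 2 + 2 * y ^ 2 ∧ u ^ 2 = (x ^ 2 - 2 * y ^ 2) ^ 2 := by
  have hp0 : (0 : ℤ) < p := by exact_mod_cast hpp.pos
  have hprime : Prime (p : ℤ) := Nat.prime_iff_prime_int.mp hpp
  have hv2 := sq_pos_of_ne_zero hv
  have hlt : u < p ∧ -p < u := abs_lt_of_sq_lt_sq' (by linarith) hp0.le |>.symm
  have hpo : Odd (p : ℤ) := by exact_mod_cast Nat.odd_iff.mpr hodd
  have huo : Odd u := by
    have : Odd (u ^ 2) := by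
      rw [show u ^ 2 = (p : ℤ) ^ 2 - 2 * v ^ 2 by linarith]
      exact (hpo.pow).sub_even (even_two_mul _)
    exact (Int.odd_pow' (by norm_num)).mp this
  obtain ⟨b, hb⟩ : Even ((p : ℤ) + u) := hpo.add_odd huo
  obtain ⟨a, ha⟩ : Even ((p : ℤ) - u) := hpo.sub_odd huo
  have hab : a + b = p := by linarith
  have hprod : 2 * (a * b) = v ^ 2 := by nlinarith
  have hve : Even v := by
    have : Even (v ^ 2) := ⟨a * b, by linarith⟩
    exact (Int.even_pow.mp this).1
  obtain ⟨w, rfl⟩ := hve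
  have hprod : a * b = 2 * w ^ 2 := by linarith
  have main : ∀ a b : ℤ, 0 < a → 0 < b → a + b = p → a * b = 2 * w ^ 2 → Even a → ∃ x y : ℤ, b = x ^ 2 ∧ a = 2 * y ^ 2 := by
    intro a b ha0 hb0 hab hprod ⟨c, hc⟩
    have hcop : IsCoprime b c := by
      have hna : ¬ (p : ℤ) ∣ b := fun hd => by
        have := Int.le_of_dvd hb0 hd
        omega
      have h1 : IsCoprime (p : ℤ) b := (Prime.coprime_iff_not_dvd hprime).mpr hna
      obtain ⟨r, s, hrs⟩ := h1
      exact ⟨r + s, 2 * r, by rw [← hab, hc] at hrs; linear_combination hrs⟩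
    have hbc : b * c = w ^ 2 := by rw [hc] at hprod; linarith
    obtain ⟨x, hx⟩ := Int.sq_of_isCoprime hcop hbc
    obtain ⟨y, hy⟩ := Int.sq_of_isCoprime hcop.symm (by rw [mul_comm]; exact hbc)
    refine ⟨x, y, ?_, ?_⟩
    · rcases hx with h | h
      · exact h
      · nlinarith [sq_nonneg x]
    · rcases hy with h | h
      · linarith
      · nlinarith [sq_nonneg y]
  have hpe : Even a ∨ Even b := Int.even_mul.mp ⟨w ^ 2, by linarith⟩
  rcases hpe with he | he
  · obtain ⟨x, y, hx, hy⟩ := main a b (by omega) (by omega) hab hprod he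
    refine ⟨x, y, by rw [← hx, ← hy]; linarith, ?_⟩
    rw [← hx, ← hy]
    have : u = b - a := by linarith
    rw [this]
  · obtain ⟨x, y, hx, hy⟩ := main b a (by omega) (by omega) (by linarith) (by linarith) he
    refine ⟨x, y, by rw [← hx, ← hy]; linarith, ?_⟩
    rw [← hx, ← hy]
    have : u = b - a := by linarith
    rw [this]; ring

lemma case_one (p n k : ℕ) [Fact p.Prime] (hk : p = 8 * k + 1) (hn : p = 2 * n + 1) :
    ∃ x y : ℤ, (p : ℤ) = x ^ 2 + 2 * y ^ 2 ∧ (n.choose k : ZMod p) ^ 2 = 4 * (x : ZMod p) ^ 2 := by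
  have hpp : p.Prime := Fact.out
  have hp2 := hpp.two_le
  have h2 : (2 : ZMod p) ≠ 0 := by exact_mod_cast cz_lt (K := ZMod p) (p := p) (i := 2) (by norm_num) (by omega)
  obtain ⟨u, v, h, hu⟩ := jac_main (ZMod p) k (by omega) (by rw [ZMod.card, hk]) h2
  rw [ZMod.card] at h
  refine ⟨u, v, h.symm, ?_⟩
  have e := choose_refl (K := ZMod p) (p := p) (4 * k) (4 * k) (by omega) k (by omega)
  rw [show n = 4 * k by omega, e, show 4 * k + k = 5 * k by ring, mul_pow, ← hu, ← pow_mul, mul_comm k 2, pow_mul]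
  norm_num
  ring

lemma case_three (p n k : ℕ) [Fact p.Prime] (hk : p = 8 * k + 3) (hn : p = 2 * n + 1) :
    ∃ x y : ℤ, (p : ℤ) = x ^ 2 + 2 * y ^ 2 ∧ (n.choose k : ZMod p) ^ 2 = 4 * (x : ZMod p) ^ 2 := by
  have hpp : p.Prime := Fact.out
  let F := GaloisField p 2
  have : Finite F := inferInstance
  let _ : Fintype F := Fintype.ofFinite F
  have hcard : Fintype.card F = p ^ 2 := by
    rw [← Nat.card_eq_fintype_card]; exact GaloisField.card p 2 (by norm_num)
  have h2 : (2 : F) ≠ 0 := by exact_mod_cast cz_lt (K := F) (p := p) (i := 2) (by norm_num) (by omega)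
  obtain ⟨u, v, h, hu⟩ := jac_main F (k * p + (3 * k + 1)) (by omega) (by rw [hcard, hk]; ring) h2
  rw [hcard] at h
  push_cast at h
  have hu' : (2 * (u : ZMod p)) ^ 2 = ((5 * (k * p + (3 * k + 1))).choose (k * p + (3 * k + 1)) : ZMod p) ^ 2 := by
    apply (algebraMap (ZMod p) F).injective
    simp only [map_pow, map_mul, map_intCast, map_natCast, map_ofNat]
    exact hu
  have hL : ((5 * (k * p + (3 * k + 1))).choose (k * p + (3 * k + 1)) : ZMod p)
      = ((7 * k + 2).choose (3 * k + 1) : ZMod p) * ((5 * k + 1).choose k : ZMod p) := by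
    have := Choose.choose_modEq_choose_mod_mul_choose_div_nat (p := p) (n := 5 * (k * p + (3 * k + 1))) (k := k * p + (3 * k + 1))
    rw [← ZMod.natCast_eq_natCast_iff] at this
    rw [this]
    have a1 : 5 * (k * p + (3 * k + 1)) = (7 * k + 2) + p * (5 * k + 1) := by rw [hk]; ring
    have a2 : k * p + (3 * k + 1) = (3 * k + 1) + p * k := by ring
    rw [a1, a2, Nat.add_mul_mod_self_left, Nat.add_mul_mod_self_left, Nat.mod_eq_of_lt (by omega), Nat.mod_eq_of_lt (by omega),
      Nat.add_mul_div_left _ _ hpp.pos, Nat.add_mul_div_left _ _ hpp.pos, Nat.div_eq_of_lt (by omega), Nat.div_eq_of_lt (by omega)]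
    push_cast
    simp
  have e1 := choose_refl (K := ZMod p) (p := p) (4 * k + 1) (4 * k + 1) (by omega) k (by omega)
  have e2 := choose_refl (K := ZMod p) (p := p) (4 * k + 1) (4 * k + 1) (by omega) (3 * k + 1) (by omega)
  rw [show 4 * k + 1 + k = 5 * k + 1 by ring] at e1
  rw [show 4 * k + 1 + (3 * k + 1) = 7 * k + 2 by ring, Nat.choose_symm_of_eq_add (show 4 * k + 1 = (3 * k + 1) + k by ring)] at e2
  rw [show n = 4 * k + 1 by omega]
  set c : ZMod p := ((4 * k + 1).choose k : ZMod p) with hc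
  have hc0 : c ≠ 0 := by
    rw [hc, Ne, CharP.cast_eq_zero_iff (ZMod p) p]
    intro hd
    have h3 : p ∣ (4 * k + 1).factorial := by
      rw [← Nat.choose_mul_factorial_mul_factorial (show k ≤ 4 * k + 1 by omega), mul_assoc]
      exact Dvd.dvd.mul_right hd _
    have := (hpp.dvd_factorial).mp h3
    omega
  have sq1 : ∀ j : ℕ, ((-1 : ZMod p) ^ j) ^ 2 = 1 := by
    intro j; rw [← pow_mul, mul_comm, pow_mul]; simp
  have hu4 : (2 * (u : ZMod p)) ^ 2 = (c ^ 2) ^ 2 := by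
    rw [hu', hL]
    have f1 : c ^ 2 = ((5 * k + 1).choose k : ZMod p) ^ 2 := by rw [e1, mul_pow, sq1, one_mul]
    have f2 : c ^ 2 = ((7 * k + 2).choose (3 * k + 1) : ZMod p) ^ 2 := by rw [e2, mul_pow, sq1, one_mul]
    rw [mul_pow, ← f1, ← f2]; ring
  have hv : v ≠ 0 := by
    rintro rfl
    have h5 : (p : ℤ) ∣ u := by
      have : (p : ℤ) ∣ u ^ 2 := ⟨p, by linarith⟩
      exact (Nat.prime_iff_prime_int.mp hpp).dvd_of_dvd_pow this
    rw [← ZMod.intCast_zmod_eq_zero_iff_dvd] at h5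
    rw [h5] at hu4
    apply hc0
    have : (c ^ 2) ^ 2 = 0 := by rw [← hu4]; ring
    exact pow_eq_zero_iff (two_ne_zero) |>.mp (pow_eq_zero_iff (two_ne_zero) |>.mp this)
  obtain ⟨x, y, hxy, hux⟩ := rep_of_sq p hpp (by omega) u v h hv
  refine ⟨x, y, hxy, ?_⟩
  have z1 : (x : ZMod p) ^ 2 + 2 * (y : ZMod p) ^ 2 = 0 := by
    have := congrArg (Int.cast : ℤ → ZMod p) hxy
    push_cast at this
    rw [← this]; simp
  have z2 : (u : ZMod p) ^ 2 = ((x : ZMod p) ^ 2 - 2 * (y : ZMod p) ^ 2) ^ 2 := by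
    have := congrArg (Int.cast : ℤ → ZMod p) hux
    push_cast at this
    exact this
  have z3 : (c ^ 2) ^ 2 = (4 * (x : ZMod p) ^ 2) ^ 2 := by
    rw [← hu4, mul_pow, z2, show 2 * (y : ZMod p) ^ 2 = - (x : ZMod p) ^ 2 by linear_combination z1]; ring
  rcases sq_eq_sq_iff_eq_or_eq_neg.mp z3 with h | h
  · exact h
  · exfalso
    have hx0 : (2 * (x : ZMod p)) ≠ 0 := by
      intro h0
      apply hc0
      have : c ^ 2 = 0 := by rw [h]; linear_combination (-2 * (x : ZMod p)) * h0
      exact pow_eq_zero_iff (two_ne_zero) |>.mp this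
    have hsq : IsSquare (-1 : ZMod p) := ⟨c / (2 * x), by
      rw [div_mul_div_comm, eq_div_iff (mul_ne_zero hx0 hx0), ← sq c, h]; ring⟩
    rw [ZMod.exists_sq_eq_neg_one_iff] at hsq
    omega

lemma case_p3 : (∑ n ∈ Finset.range 3, (A n : ZMod 3) / (8 : ZMod 3) ^ n) = 1 := by
  have a0 : A 0 = 1 := by decide
  have a1 : A 1 = 4 := by decide
  have a2 : A 2 = 28 := by decide
  have h8 : (8 : ZMod 3) = -1 := by decide
  rw [Finset.sum_range_succ, Finset.sum_range_succ, Finset.sum_range_one, a0, a1, a2, h8]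
  norm_num
  decide

theorem stmt_7 (p : ℕ) [Fact p.Prime] (hodd : Odd p) :
    ((p % 8 = 1 ∨ p % 8 = 3) →
      (∃ x y : ℤ, (p : ℤ) = x ^ 2 + 2 * y ^ 2) ∧
        ∀ x y : ℤ, (p : ℤ) = x ^ 2 + 2 * y ^ 2 →
          (∑ n ∈ Finset.range p, (A n : ZMod p) / (8 : ZMod p) ^ n) = 4 * (x : ZMod p) ^ 2)
    ∧
    ((p % 8 = 5 ∨ p % 8 = 7) →
      (∑ n ∈ Finset.range p, (A n : ZMod p) / (8 : ZMod p) ^ n) = 0) := by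
  have hpp : p.Prime := Fact.out
  refine ⟨fun h => ?_, fun h => sum_zero p h⟩
  have key : ∃ x y : ℤ, (p : ℤ) = x ^ 2 + 2 * y ^ 2 ∧
      (∑ n ∈ Finset.range p, (A n : ZMod p) / (8 : ZMod p) ^ n) = 4 * (x : ZMod p) ^ 2 := by
    by_cases hp3 : p = 3
    · subst hp3
      refine ⟨1, 1, by norm_num, ?_⟩
      rw [case_p3, Int.cast_one, one_pow, mul_one, show (4 : ZMod 3) = 1 by rfl]
    · have h2 := hpp.two_le
      have hn : p = 2 * (p / 2) + 1 := by omega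
      rw [sum_binom p (p / 2) (p / 8) (by omega) h hn rfl]
      rcases h with h | h
      · exact case_one p (p / 2) (p / 8) (by omega) hn
      · exact case_three p (p / 2) (p / 8) (by omega) hn
  obtain ⟨x, y, hxy, hS⟩ := key
  refine ⟨⟨x, y, hxy⟩, ?_⟩
  intro x' y' h'
  rw [hS]
  have := congrArg (Int.cast : ℤ → ZMod p) (rep_unique p hpp x y x' y' hxy h')
  push_cast at this
  rw [this]
end

section
/- For every nonnegative integer n, Σ_{k=0}^{n} C(2k,k) · C(n+k,2k) · (-9)^{n-k} · a_k = Σ_{k=0}^{n} C(2k,k)^2 · C(4k,2k) · C(n+3k,4k) · (-27)^{n-k}, where a_k = Σ_{j=0}^{k} C(k,j)^2 · C(2j,j). -/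
open Finset

/-- `a n = ∑_{k=0}^{n} C(n,k)^2·C(2k,k)`. -/
def a (n : ℕ) : ℕ :=
  ∑ k ∈ Finset.range (n + 1), Nat.choose n k ^ 2 * Nat.choose (2 * k) k

/-- `x^(n-k)/(n-k)!`, zero when `k > n`. -/
def wfun (x : ℚ) (n k : ℕ) : ℚ := if k ≤ n then x ^ (n - k) / (n - k).factorial else 0

theorem wfun_step (x : ℚ) (n k : ℕ) :
    x * wfun x n k = ((n : ℚ) + 1 - k) * wfun x (n + 1) k := by
  unfold wfun
  rcases Nat.lt_trichotomy k (n + 1) with h | h | h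
  · have h1 : k ≤ n := by omega
    obtain ⟨m, rfl⟩ := Nat.exists_eq_add_of_le h1
    have e : k + m + 1 - k = m + 1 := by omega
    have hm : (m.factorial : ℚ) ≠ 0 := by exact_mod_cast m.factorial_ne_zero
    have hm1 : (m : ℚ) + 1 ≠ 0 := by positivity
    rw [if_pos h1, if_pos (by omega), e, Nat.add_sub_cancel_left, Nat.factorial_succ]
    push_cast
    field_simp
    ring
  · subst h
    simp
  · rw [if_neg (by omega), if_neg (by omega)]; simp

theorem wfun_succ (x : ℚ) (n k : ℕ) : wfun x (n + 1) (k + 1) = wfun x n k := by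
  simp [wfun]

theorem wfun_zero (x : ℚ) {n k : ℕ} (h : n < k) : wfun x n k = 0 := by
  simp [wfun, h]

theorem sum_extend_s8 (f : ℕ → ℚ) (n m : ℕ) (hm : n + 1 ≤ m) (hf : ∀ k, n < k → f k = 0) :
    ∑ k ∈ range (n + 1), f k = ∑ k ∈ range m, f k := by
  apply Finset.sum_subset
  · intro k hk; simp at *; omega
  · intro k _ hk; simp at hk; exact hf k (by omega)

/-- terms -/
def tA (n k : ℕ) : ℚ := (n.factorial : ℚ) ^ 2 * (2 * k).factorial / (k.factorial : ℚ) ^ 4 * wfun 1 n k ^ 2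
def tL (n k : ℕ) : ℚ := ((n + k).factorial : ℚ) / (k.factorial : ℚ) ^ 2 * wfun (-9) n k * (a k : ℚ)
def tR (n k : ℕ) : ℚ := ((n + 3 * k).factorial : ℚ) / (k.factorial : ℚ) ^ 4 * wfun (-27) n k

theorem choose_two (k : ℕ) : ((2 * k).choose k : ℚ) = (2 * k).factorial / (k.factorial : ℚ) ^ 2 := by
  rw [Nat.cast_choose ℚ (by omega), show 2 * k - k = k by omega, sq]

theorem a_eq (n m : ℕ) (hm : n + 1 ≤ m) : (a n : ℚ) = ∑ k ∈ range m, tA n k := by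
  rw [← sum_extend_s8 (tA n) n m hm (fun k hk => by simp [tA, wfun_zero _ hk])]
  unfold a
  push_cast
  apply Finset.sum_congr rfl
  intro k hk
  have h : k ≤ n := by simp at hk; omega
  rw [choose_two, Nat.cast_choose ℚ h, tA, wfun, if_pos h]
  have := Nat.factorial_ne_zero k
  have := Nat.factorial_ne_zero (n - k)
  field_simp
  simp

theorem a_rec (n : ℕ) : ((n : ℚ) + 2) ^ 2 * a (n + 2)
    = (10 * ((n : ℚ) + 1) ^ 2 + 10 * (n + 1) + 3) * a (n + 1) - 9 * ((n : ℚ) + 1) ^ 2 * a n := by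
  rw [a_eq (n + 2) (n + 3) (by omega), a_eq (n + 1) (n + 3) (by omega), a_eq n (n + 3) (by omega)]
  have key := Finset.sum_range_sub (fun k : ℕ => ((n : ℚ) + 1) ^ 2 * (k : ℚ) ^ 3 * (3 * k - 4 * n - 8)
    * ((n.factorial : ℚ) ^ 2 * (2 * k).factorial / (k.factorial : ℚ) ^ 4 * wfun 1 (n + 2) k ^ 2)) (n + 3)
  rw [wfun_zero 1 (show n + 2 < n + 3 by omega)] at key
  simp only [Nat.cast_zero] at key
  have : ∀ k ∈ range (n + 3), ((n : ℚ) + 2) ^ 2 * tA (n + 2) k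
    - (10 * ((n : ℚ) + 1) ^ 2 + 10 * (n + 1) + 3) * tA (n + 1) k + 9 * ((n : ℚ) + 1) ^ 2 * tA n k = _ :=
    fun k _ => by
      have h1 := wfun_step 1 (n + 1) k
      have h0 := wfun_step 1 n k
      have hs := wfun_succ 1 (n + 1) k
      show _ = ((n : ℚ) + 1) ^ 2 * ((k + 1 : ℕ) : ℚ) ^ 3 * (3 * ((k + 1 : ℕ) : ℚ) - 4 * n - 8)
    * ((n.factorial : ℚ) ^ 2 * (2 * (k + 1)).factorial / ((k + 1).factorial : ℚ) ^ 4 * wfun 1 (n + 2) (k + 1) ^ 2)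
       - ((n : ℚ) + 1) ^ 2 * (k : ℚ) ^ 3 * (3 * k - 4 * n - 8)
    * ((n.factorial : ℚ) ^ 2 * (2 * k).factorial / (k.factorial : ℚ) ^ 4 * wfun 1 (n + 2) k ^ 2)
      rw [one_mul] at h1 h0
      unfold tA
      rw [hs, h0, h1, show 2 * (k + 1) = 2 * k + 1 + 1 by ring]
      have := Nat.factorial_ne_zero k
      have hk1 : (k : ℚ) + 1 ≠ 0 := by positivity
      simp only [Nat.factorial_succ]
      push_cast
      generalize wfun 1 (n + 1 + 1) k = W
      field_simp
      ring
  have h2 := (Finset.sum_congr rfl this).trans key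
  rw [Finset.sum_add_distrib, Finset.sum_sub_distrib, ← Finset.mul_sum, ← Finset.mul_sum, ← Finset.mul_sum] at h2
  linear_combination h2

theorem a_rec' (k : ℕ) : ((k : ℚ) + 1) ^ 2 * a (k + 1)
    = (10 * (k : ℚ) ^ 2 + 10 * k + 3) * a k - 9 * (k : ℚ) ^ 2 * a (k - 1) := by
  cases k with
  | zero => simp [a, Finset.sum_range_succ]
  | succ n =>
    have := a_rec n
    simp only [Nat.add_sub_cancel]
    push_cast
    linear_combination this

/-- sums -/
def sL (n : ℕ) : ℚ := ∑ k ∈ range (n + 1), tL n k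
def sR (n : ℕ) : ℚ := ∑ k ∈ range (n + 1), tR n k

theorem sL_eq (n m : ℕ) (hm : n + 1 ≤ m) : sL n = ∑ k ∈ range m, tL n k :=
  sum_extend_s8 (tL n) n m hm (fun k hk => by simp [tL, wfun_zero _ hk])
theorem sR_eq (n m : ℕ) (hm : n + 1 ≤ m) : sR n = ∑ k ∈ range m, tR n k :=
  sum_extend_s8 (tR n) n m hm (fun k hk => by simp [tR, wfun_zero _ hk])

theorem sR_rec (n : ℕ) : ((n : ℚ) + 2) ^ 3 * sR (n + 2)
    + (2 * n + 3) * (7 * ((n : ℚ) + 1) ^ 2 + 7 * (n + 1) + 3) * sR (n + 1)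
    + 81 * ((n : ℚ) + 1) ^ 3 * sR n = 0 := by
  rw [sR_eq (n + 2) (n + 3) (by omega), sR_eq (n + 1) (n + 3) (by omega), sR_eq n (n + 3) (by omega)]
  have key := Finset.sum_range_sub (fun k : ℕ => (k : ℚ) ^ 4 * (-28 - 16 * n)
    * (((n + 3 * k).factorial : ℚ) / (k.factorial : ℚ) ^ 4 * wfun (-27) (n + 2) k)) (n + 3)
  rw [wfun_zero (-27) (show n + 2 < n + 3 by omega)] at key
  simp only [Nat.cast_zero] at key
  have : ∀ k ∈ range (n + 3), ((n : ℚ) + 2) ^ 3 * tR (n + 2) k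
    + (2 * n + 3) * (7 * ((n : ℚ) + 1) ^ 2 + 7 * (n + 1) + 3) * tR (n + 1) k
    + 81 * ((n : ℚ) + 1) ^ 3 * tR n k = _ :=
    fun k _ => by
      have h1 := wfun_step (-27) (n + 1) k
      have h0 := wfun_step (-27) n k
      have hs := wfun_succ (-27) (n + 1) k
      show _ = ((k + 1 : ℕ) : ℚ) ^ 4 * (-28 - 16 * n)
    * (((n + 3 * (k + 1)).factorial : ℚ) / ((k + 1).factorial : ℚ) ^ 4 * wfun (-27) (n + 2) (k + 1))
       - (k : ℚ) ^ 4 * (-28 - 16 * n)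
    * (((n + 3 * k).factorial : ℚ) / (k.factorial : ℚ) ^ 4 * wfun (-27) (n + 2) k)
      unfold tR
      have e1 : wfun (-27) (n + 1) k = -(((n + 1 : ℕ) : ℚ) + 1 - k) * wfun (-27) (n + 2) k / 27 := by
        linear_combination (-1 / 27) * h1
      have e0 : wfun (-27) n k = -((n : ℚ) + 1 - k) * wfun (-27) (n + 1) k / 27 := by
        linear_combination (-1 / 27) * h0
      rw [hs, e0, e1, show n + 3 * (k + 1) = n + 3 * k + 1 + 1 + 1 by ring,
        show n + 2 + 3 * k = n + 3 * k + 1 + 1 by ring, show n + 1 + 3 * k = n + 3 * k + 1 by ring]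
      have := Nat.factorial_ne_zero k
      have hk1 : (k : ℚ) + 1 ≠ 0 := by positivity
      simp only [Nat.factorial_succ]
      push_cast
      generalize wfun (-27) (n + 2) k = W
      field_simp
      ring
  have h2 := (Finset.sum_congr rfl this).trans key
  rw [Finset.sum_add_distrib, Finset.sum_add_distrib, ← Finset.mul_sum, ← Finset.mul_sum, ← Finset.mul_sum] at h2
  linear_combination h2

theorem sL_rec (n : ℕ) : ((n : ℚ) + 2) ^ 3 * sL (n + 2)
    + (2 * n + 3) * (7 * ((n : ℚ) + 1) ^ 2 + 7 * (n + 1) + 3) * sL (n + 1)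
    + 81 * ((n : ℚ) + 1) ^ 3 * sL n = 0 := by
  rw [sL_eq (n + 2) (n + 3) (by omega), sL_eq (n + 1) (n + 3) (by omega), sL_eq n (n + 3) (by omega)]
  have key := Finset.sum_range_sub (fun k : ℕ => (k : ℚ) ^ 2 * (-6 - 4 * n)
    * ((k : ℚ) ^ 2 * a k + ((n : ℚ) + k + 1) * (n + 2 - k) * a (k - 1))
    * (((n + k).factorial : ℚ) / (k.factorial : ℚ) ^ 2 * wfun (-9) (n + 2) k)) (n + 3)
  rw [wfun_zero (-9) (show n + 2 < n + 3 by omega)] at key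
  simp only [Nat.cast_zero] at key
  have : ∀ k ∈ range (n + 3), ((n : ℚ) + 2) ^ 3 * tL (n + 2) k
    + (2 * n + 3) * (7 * ((n : ℚ) + 1) ^ 2 + 7 * (n + 1) + 3) * tL (n + 1) k
    + 81 * ((n : ℚ) + 1) ^ 3 * tL n k = _ :=
    fun k _ => by
      have h1 := wfun_step (-9) (n + 1) k
      have h0 := wfun_step (-9) n k
      have hs := wfun_succ (-9) (n + 1) k
      have ha := a_rec' k
      show _ = ((k + 1 : ℕ) : ℚ) ^ 2 * (-6 - 4 * n)
    * (((k + 1 : ℕ) : ℚ) ^ 2 * a (k + 1)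
      + ((n : ℚ) + ((k + 1 : ℕ) : ℚ) + 1) * (n + 2 - ((k + 1 : ℕ) : ℚ)) * a k)
    * (((n + (k + 1)).factorial : ℚ) / ((k + 1).factorial : ℚ) ^ 2 * wfun (-9) (n + 2) (k + 1))
       - (k : ℚ) ^ 2 * (-6 - 4 * n)
    * ((k : ℚ) ^ 2 * a k + ((n : ℚ) + k + 1) * (n + 2 - k) * a (k - 1))
    * (((n + k).factorial : ℚ) / (k.factorial : ℚ) ^ 2 * wfun (-9) (n + 2) k)
      rw [← Nat.cast_succ] at ha
      rw [ha]
      unfold tL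
      have e1 : wfun (-9) (n + 1) k = -(((n + 1 : ℕ) : ℚ) + 1 - k) * wfun (-9) (n + 2) k / 9 := by
        linear_combination (-1 / 9) * h1
      have e0 : wfun (-9) n k = -((n : ℚ) + 1 - k) * wfun (-9) (n + 1) k / 9 := by
        linear_combination (-1 / 9) * h0
      rw [hs, e0, e1, show n + (k + 1) = n + k + 1 by ring,
        show n + 2 + k = n + k + 1 + 1 by ring, show n + 1 + k = n + k + 1 by ring]
      have := Nat.factorial_ne_zero k
      have hk1 : (k : ℚ) + 1 ≠ 0 := by positivity
      simp only [Nat.factorial_succ]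
      push_cast
      generalize wfun (-9) (n + 2) k = W
      generalize (a k : ℚ) = A
      generalize (a (k - 1) : ℚ) = B
      field_simp
      ring
  have h2 := (Finset.sum_congr rfl this).trans key
  rw [Finset.sum_add_distrib, Finset.sum_add_distrib, ← Finset.mul_sum, ← Finset.mul_sum, ← Finset.mul_sum] at h2
  linear_combination h2

theorem sL_eq_sR (n : ℕ) : sL n = sR n ∧ sL (n + 1) = sR (n + 1) := by
  induction n with
  | zero =>
    constructor <;> simp [sL, sR, tL, tR, wfun, a, Finset.sum_range_succ] <;> norm_num [Nat.factorial]
  | succ n ih =>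
    refine ⟨ih.2, ?_⟩
    have h1 := sL_rec n
    have h2 := sR_rec n
    rw [ih.1, ih.2] at h1
    have h3 : ((n : ℚ) + 2) ^ 3 ≠ 0 := by positivity
    apply mul_left_cancel₀ h3
    linear_combination h1 - h2

theorem stmt_8 (n : ℕ) :
    (∑ k ∈ Finset.range (n + 1),
        (Nat.choose (2 * k) k : ℤ) * (Nat.choose (n + k) (2 * k) : ℤ) *
          (-9 : ℤ) ^ (n - k) * (a k : ℤ))
      = ∑ k ∈ Finset.range (n + 1),
          (Nat.choose (2 * k) k : ℤ) ^ 2 * (Nat.choose (4 * k) (2 * k) : ℤ) *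
            (Nat.choose (n + 3 * k) (4 * k) : ℤ) * (-27 : ℤ) ^ (n - k) := by
  have h := (sL_eq_sR n).1
  have : ∀ x y : ℤ, (x : ℚ) = y → x = y := fun x y h => by exact_mod_cast h
  apply this
  push_cast
  refine Eq.trans ?_ (h.trans ?_)
  · apply Finset.sum_congr rfl
    intro k hk
    have h : k ≤ n := by simp at hk; omega
    rw [choose_two, Nat.cast_choose ℚ (show 2 * k ≤ n + k by omega),
      show n + k - 2 * k = n - k by omega, tL, wfun, if_pos h]
    have := Nat.factorial_ne_zero k
    have := Nat.factorial_ne_zero (n - k)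
    have := Nat.factorial_ne_zero (2 * k)
    field_simp
  · apply Finset.sum_congr rfl
    intro k hk
    have h : k ≤ n := by simp at hk; omega
    rw [choose_two, Nat.cast_choose ℚ (show 4 * k ≤ n + 3 * k by omega),
      Nat.cast_choose ℚ (show 2 * k ≤ 4 * k by omega),
      show n + 3 * k - 4 * k = n - k by omega, show 4 * k - 2 * k = 2 * k by omega,
      tR, wfun, if_pos h]
    have := Nat.factorial_ne_zero k
    have := Nat.factorial_ne_zero (n - k)
    have := Nat.factorial_ne_zero (2 * k)
    have := Nat.factorial_ne_zero (4 * k)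
    field_simp
end

section
/- Let p be an odd prime and let u be an integer with u(u+1)(3u+1) not divisible by p and u ≢ -3 (mod p). Then Σ_{k=0}^{p-1} C(2k,k)^2 · C(4k,2k) · (u/(9(1+3u)^4))^k ≡ Σ_{k=0}^{p-1} C(2k,k)^2 · C(4k,2k) · (u^3/(9(3+u)^4))^k (mod p). -/
open Finset

namespace Stmt10

/-- The inverse factorial, extended by zero to negative integers. -/
noncomputable def g (z : ℤ) : ℚ := if 0 ≤ z then 1 / (z.toNat.factorial : ℚ) else 0

lemma g_pred (z : ℤ) : g (z - 1) = z * g z := by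
  unfold g
  rcases lt_trichotomy z 0 with h | h | h
  · rw [if_neg (by omega), if_neg (by omega)]; simp
  · subst h; simp
  · rw [if_pos (by omega), if_pos (by omega)]
    obtain ⟨n, rfl⟩ : ∃ n : ℕ, z = n + 1 := ⟨(z - 1).toNat, by omega⟩
    have h1 : ((n : ℤ) + 1 - 1).toNat = n := by omega
    have h2 : ((n : ℤ) + 1).toNat = n + 1 := by omega
    rw [h1, h2, Nat.factorial_succ]
    push_cast
    have := Nat.cast_ne_zero (R := ℚ).2 (Nat.factorial_ne_zero n)
    field_simp

lemma g_neg {z : ℤ} (h : z < 0) : g z = 0 := by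
  unfold g; rw [if_neg (by omega)]

lemma g_nat (n : ℕ) : g (n : ℤ) = 1 / (n.factorial : ℚ) := by
  unfold g; simp

lemma choose_eq_g (a b : ℕ) : (Nat.choose a b : ℚ) = a.factorial / b.factorial * g ((a : ℤ) - b) := by
  rcases le_or_gt b a with h | h
  · rw [Nat.cast_choose ℚ h, show (a : ℤ) - b = ((a - b : ℕ) : ℤ) by omega, g_nat]
    field_simp
  · rw [Nat.choose_eq_zero_of_lt h, g_neg (by omega)]; simp

noncomputable def T (x : ℚ) (s t n k : ℕ) : ℚ :=
  x ^ n * (-1 / 27) ^ k * (n + t * k).factorial / (k.factorial : ℚ) ^ 4 * g ((n : ℤ) - s * k)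

noncomputable def G (x : ℚ) (s t : ℕ) (c : ℚ) (n k : ℕ) : ℚ :=
  c * (k : ℚ) ^ 4 * (x ^ n * (-1 / 27) ^ k * (n + t * k).factorial / (k.factorial : ℚ) ^ 4) *
    g ((n : ℤ) + 2 - s * k)

lemma cert1 (n k : ℕ) :
    ((n : ℚ) + 2) ^ 3 * T 27 1 3 (n + 2) k
      - (2 * n + 3) * (7 * (n + 1) ^ 2 + 7 * (n + 1) + 3) * T 27 1 3 (n + 1) k
      + 81 * (n + 1) ^ 3 * T 27 1 3 n k
    = G 27 1 3 (-2916 * (4 * n + 7)) n (k + 1) - G 27 1 3 (-2916 * (4 * n + 7)) n k := by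
  unfold T G
  have e0 : g ((n : ℤ) - (1 : ℕ) * k) = (n + 1 - k) * ((n + 2 - k) * g ((n : ℤ) + 2 - (1 : ℕ) * k)) := by
    rw [show (n : ℤ) - (1 : ℕ) * k = ((n : ℤ) + 2 - (1 : ℕ) * k) - 1 - 1 by ring, g_pred, g_pred]
    push_cast; ring
  have e1 : g (((n + 1 : ℕ) : ℤ) - (1 : ℕ) * k) = (n + 2 - k) * g ((n : ℤ) + 2 - (1 : ℕ) * k) := by
    rw [show ((n + 1 : ℕ) : ℤ) - (1 : ℕ) * k = ((n : ℤ) + 2 - (1 : ℕ) * k) - 1 by push_cast; ring, g_pred]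
    push_cast; ring
  have e2 : g (((n + 2 : ℕ) : ℤ) - (1 : ℕ) * k) = g ((n : ℤ) + 2 - (1 : ℕ) * k) := by
    push_cast; rfl
  have e3 : g ((n : ℤ) + 2 - (1 : ℕ) * ((k + 1 : ℕ) : ℤ)) = (n + 2 - k) * g ((n : ℤ) + 2 - (1 : ℕ) * k) := by
    rw [show (n : ℤ) + 2 - (1 : ℕ) * ((k + 1 : ℕ) : ℤ) = ((n : ℤ) + 2 - (1 : ℕ) * k) - 1 by push_cast; ring, g_pred]
    push_cast; ring
  rw [e0, e1, e2, e3]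
  rw [show n + 2 + 3 * k = n + 3 * k + 1 + 1 by ring, show n + 1 + 3 * k = n + 3 * k + 1 by ring,
    show n + 3 * (k + 1) = n + 3 * k + 1 + 1 + 1 by ring]
  simp only [Nat.factorial_succ]
  have hk : (k.factorial : ℚ) ≠ 0 := Nat.cast_ne_zero.2 (Nat.factorial_ne_zero k)
  have hk1 : (k : ℚ) + 1 ≠ 0 := by positivity
  push_cast
  generalize g _ = y
  field_simp
  ring

lemma cert2 (n k : ℕ) :
    ((n : ℚ) + 2) ^ 3 * T 3 3 1 (n + 2) k
      - (2 * n + 3) * (7 * (n + 1) ^ 2 + 7 * (n + 1) + 3) * T 3 3 1 (n + 1) k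
      + 81 * (n + 1) ^ 3 * T 3 3 1 n k
    = G 3 3 1 (-324 * (4 * n + 5)) n (k + 1) - G 3 3 1 (-324 * (4 * n + 5)) n k := by
  unfold T G
  have e0 : g ((n : ℤ) - (3 : ℕ) * k) = (n + 1 - 3 * k) * ((n + 2 - 3 * k) * g ((n : ℤ) + 2 - (3 : ℕ) * k)) := by
    rw [show (n : ℤ) - (3 : ℕ) * k = ((n : ℤ) + 2 - (3 : ℕ) * k) - 1 - 1 by ring, g_pred, g_pred]
    push_cast; ring
  have e1 : g (((n + 1 : ℕ) : ℤ) - (3 : ℕ) * k) = (n + 2 - 3 * k) * g ((n : ℤ) + 2 - (3 : ℕ) * k) := by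
    rw [show ((n + 1 : ℕ) : ℤ) - (3 : ℕ) * k = ((n : ℤ) + 2 - (3 : ℕ) * k) - 1 by push_cast; ring, g_pred]
    push_cast; ring
  have e2 : g (((n + 2 : ℕ) : ℤ) - (3 : ℕ) * k) = g ((n : ℤ) + 2 - (3 : ℕ) * k) := by
    push_cast; rfl
  have e3 : g ((n : ℤ) + 2 - (3 : ℕ) * ((k + 1 : ℕ) : ℤ))
      = (n - 3 * k) * ((n + 1 - 3 * k) * ((n + 2 - 3 * k) * g ((n : ℤ) + 2 - (3 : ℕ) * k))) := by
    rw [show (n : ℤ) + 2 - (3 : ℕ) * ((k + 1 : ℕ) : ℤ) = ((n : ℤ) + 2 - (3 : ℕ) * k) - 1 - 1 - 1 by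
      push_cast; ring, g_pred, g_pred, g_pred]
    push_cast; ring
  rw [e0, e1, e2, e3]
  rw [show n + 2 + 1 * k = n + 1 * k + 1 + 1 by ring, show n + 1 + 1 * k = n + 1 * k + 1 by ring,
    show n + 1 * (k + 1) = n + 1 * k + 1 by ring]
  simp only [Nat.factorial_succ]
  have hk : (k.factorial : ℚ) ≠ 0 := Nat.cast_ne_zero.2 (Nat.factorial_ne_zero k)
  have hk1 : (k : ℚ) + 1 ≠ 0 := by positivity
  push_cast
  generalize g _ = y
  field_simp
  ring

lemma G_zero (x : ℚ) (s t : ℕ) (c : ℚ) (n : ℕ) : G x s t c n 0 = 0 := by simp [G]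

lemma G_big (x : ℚ) (s t : ℕ) (hs : 1 ≤ s) (c : ℚ) (n N : ℕ) (h : n + 2 < N) : G x s t c n N = 0 := by
  unfold G
  rw [g_neg, mul_zero]
  have : 1 * (N : ℤ) ≤ s * N := by gcongr; exact_mod_cast hs
  omega

lemma rec_sum (x : ℚ) (s t : ℕ) (hs : 1 ≤ s) (c : ℕ → ℚ)
    (hc : ∀ n k : ℕ, ((n : ℚ) + 2) ^ 3 * T x s t (n + 2) k
      - (2 * n + 3) * (7 * (n + 1) ^ 2 + 7 * (n + 1) + 3) * T x s t (n + 1) k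
      + 81 * (n + 1) ^ 3 * T x s t n k = G x s t (c n) n (k + 1) - G x s t (c n) n k)
    (n N : ℕ) (h : n + 2 < N) :
    ((n : ℚ) + 2) ^ 3 * ∑ k ∈ range N, T x s t (n + 2) k
      - (2 * n + 3) * (7 * (n + 1) ^ 2 + 7 * (n + 1) + 3) * ∑ k ∈ range N, T x s t (n + 1) k
      + 81 * (n + 1) ^ 3 * ∑ k ∈ range N, T x s t n k = 0 := by
  rw [mul_sum, mul_sum, mul_sum, ← sum_sub_distrib, ← sum_add_distrib, sum_congr rfl (fun k _ => hc n k),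
    sum_range_sub, G_zero, G_big x s t hs _ n N h, sub_zero]

lemma T_big (x : ℚ) (s t : ℕ) (hs : 1 ≤ s) (n k : ℕ) (h : n < k) : T x s t n k = 0 := by
  unfold T
  rw [g_neg, mul_zero]
  have : 1 * (k : ℤ) ≤ s * k := by gcongr; exact_mod_cast hs
  omega

lemma sum_big (x : ℚ) (s t : ℕ) (hs : 1 ≤ s) (n N : ℕ) (h : n < N) :
    ∑ k ∈ range N, T x s t n k = ∑ k ∈ range (n + 1), T x s t n k := by
  symm
  apply sum_subset
  · intro k; simp only [mem_range]; omega
  · intro k _ hk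
    apply T_big x s t hs
    simp only [mem_range] at hk; omega

lemma main_aux (n : ℕ) : (∀ N, n < N → ∑ k ∈ range N, T 27 1 3 n k = ∑ k ∈ range N, T 3 3 1 n k) ∧
    (∀ N, n + 1 < N → ∑ k ∈ range N, T 27 1 3 (n + 1) k = ∑ k ∈ range N, T 3 3 1 (n + 1) k) := by
  induction n with
  | zero =>
    constructor
    · intro N h
      rw [sum_big _ _ _ (by norm_num) _ _ h, sum_big _ _ _ (by norm_num) _ _ h]
      simp [T]
    · intro N h
      rw [sum_big _ _ _ (by norm_num) _ _ h, sum_big _ _ _ (by norm_num) _ _ h]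
      simp [T, sum_range_succ, g, Nat.factorial]
      norm_num
  | succ n ih =>
    refine ⟨ih.2, fun N h => ?_⟩
    have h1 := rec_sum 27 1 3 (by norm_num) _ cert1 n N (by omega)
    have h2 := rec_sum 3 3 1 (by norm_num) _ cert2 n N (by omega)
    rw [ih.1 N (by omega), ih.2 N (by omega)] at h1
    have h3 : ((n : ℚ) + 2) ^ 3 ≠ 0 := by positivity
    apply mul_left_cancel₀ h3
    show ((n : ℚ) + 2) ^ 3 * ∑ k ∈ range N, T 27 1 3 (n + 2) k
      = ((n : ℚ) + 2) ^ 3 * ∑ k ∈ range N, T 3 3 1 (n + 2) k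
    linarith

/-- The multinomial coefficient. -/
def M (k : ℕ) : ℕ := Nat.choose (2 * k) k ^ 2 * Nat.choose (4 * k) (2 * k)

lemma M_eq (k : ℕ) : M k * k.factorial ^ 4 = (4 * k).factorial := by
  have h1 := Nat.choose_mul_factorial_mul_factorial (show k ≤ 2 * k by omega)
  have h2 := Nat.choose_mul_factorial_mul_factorial (show 2 * k ≤ 4 * k by omega)
  rw [show 2 * k - k = k by omega] at h1
  rw [show 4 * k - 2 * k = 2 * k by omega] at h2
  unfold M
  rw [← h2]
  rw [← h1]
  ring

lemma T_eq (x : ℚ) (s t : ℕ) (hst : s + t = 4) (n k : ℕ) :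
    T x s t n k = x ^ n * ((M k : ℚ) * Nat.choose (n + t * k) (4 * k) * (-1 / 27) ^ k) := by
  have h := congrArg (Nat.cast : ℕ → ℚ) (M_eq k)
  push_cast at h
  have hk : (k.factorial : ℚ) ≠ 0 := Nat.cast_ne_zero.2 (Nat.factorial_ne_zero k)
  have hk4 : ((4 * k).factorial : ℚ) ≠ 0 := Nat.cast_ne_zero.2 (Nat.factorial_ne_zero _)
  rw [choose_eq_g, T, ← hst] 
  rw [← hst] at h hk4
  have e : (((n + t * k : ℕ) : ℤ) - (((s + t) * k : ℕ) : ℤ)) = (n : ℤ) - s * k := by push_cast; ring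
  rw [e]
  rw [← h] at hk4 ⊢
  have hM : (M k : ℚ) ≠ 0 := left_ne_zero_of_mul hk4
  field_simp

lemma int_id (n N : ℕ) (h : n < N) :
    27 ^ n * ∑ k ∈ range N, (M k : ℤ) * Nat.choose (n + 3 * k) (4 * k) * (-27) ^ (N - k)
    = 3 ^ n * ∑ k ∈ range N, (M k : ℤ) * Nat.choose (n + 1 * k) (4 * k) * (-27) ^ (N - k) := by
  have h0 := (main_aux n).1 N h
  simp only [T_eq 27 1 3 rfl, T_eq 3 3 1 rfl, ← mul_sum] at h0
  have key : ∀ t : ℕ, ((∑ k ∈ range N, (M k : ℤ) * Nat.choose (n + t * k) (4 * k) * (-27) ^ (N - k) : ℤ) : ℚ)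
      = (-27) ^ N * ∑ k ∈ range N, (M k : ℚ) * Nat.choose (n + t * k) (4 * k) * (-1 / 27) ^ k := by
    intro t
    push_cast
    rw [mul_sum]
    apply sum_congr rfl
    intro k hk
    have hk := mem_range.1 hk
    obtain ⟨d, rfl⟩ := Nat.exists_eq_add_of_le hk.le
    rw [Nat.add_sub_cancel_left, pow_add]
    have : (-27 : ℚ) ^ k * (-1 / 27) ^ k = 1 := by rw [← mul_pow]; norm_num
    linear_combination (-(M k : ℚ) * Nat.choose (n + t * k) (4 * k) * (-27) ^ d) * this
  have : ∀ a b : ℤ, (a : ℚ) = b → a = b := fun a b => by exact_mod_cast id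
  apply this
  rw [Int.cast_mul, Int.cast_mul, key, key]
  push_cast
  linear_combination (-27) ^ N * h0

section modp
variable {p : ℕ} [hp : Fact p.Prime]

lemma mod_id (hp3 : (3 : ZMod p) ≠ 0) (n : ℕ) (h : n < p) :
    27 ^ n * ∑ k ∈ range p, (M k : ZMod p) * Nat.choose (n + 3 * k) (4 * k) * (-1 / 27) ^ k
    = 3 ^ n * ∑ k ∈ range p, (M k : ZMod p) * Nat.choose (n + 1 * k) (4 * k) * (-1 / 27) ^ k := by
  have h0 := congrArg (Int.cast : ℤ → ZMod p) (int_id n p h)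
  have h27 : (27 : ZMod p) ≠ 0 := by
    rw [show (27 : ZMod p) = 3 ^ 3 by norm_num]; exact pow_ne_zero _ hp3
  have key : ∀ t : ℕ, ((∑ k ∈ range p, (M k : ℤ) * Nat.choose (n + t * k) (4 * k) * (-27) ^ (p - k) : ℤ) : ZMod p)
      = (-27) ^ p * ∑ k ∈ range p, (M k : ZMod p) * Nat.choose (n + t * k) (4 * k) * (-1 / 27) ^ k := by
    intro t
    push_cast
    rw [mul_sum]
    apply sum_congr rfl
    intro k hk
    have hk := mem_range.1 hk
    have e : (-27 : ZMod p) ^ p = (-27) ^ k * (-27) ^ (p - k) := by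
      rw [← pow_add]; congr 1; omega
    have : (-27 : ZMod p) ^ k * (-1 / 27) ^ k = 1 := by
      rw [← mul_pow]
      have : (-27 : ZMod p) * (-1 / 27) = 1 := by field_simp
      rw [this, one_pow]
    rw [e]
    linear_combination (-(M k : ZMod p) * Nat.choose (n + t * k) (4 * k) * (-27) ^ (p - k)) * this
  rw [Int.cast_mul, Int.cast_mul, key, key] at h0
  push_cast at h0
  have h27' : (-27 : ZMod p) ^ p ≠ 0 := pow_ne_zero _ (neg_ne_zero.2 h27)
  apply mul_left_cancel₀ h27'
  linear_combination h0

lemma M_zero (k : ℕ) (hk : k < p) (h : p ≤ 4 * k) : (M k : ZMod p) = 0 := by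
  rw [ZMod.natCast_eq_zero_iff]
  have h1 : p ∣ M k * k.factorial ^ 4 := by
    rw [M_eq]; exact (hp.out.dvd_factorial).2 h
  rcases (hp.out.dvd_mul).1 h1 with h2 | h2
  · exact h2
  · have := (hp.out.dvd_factorial).1 (hp.out.dvd_of_dvd_pow h2)
    omega

lemma choose_mod (a j : ℕ) (h : a + j < p) :
    (Nat.choose (p - 1 - a) j : ZMod p) = (-1) ^ j * Nat.choose (a + j) a := by
  induction j with
  | zero => simp
  | succ j ih =>
    have ih := ih (by omega)
    have hj : ((j : ZMod p) + 1) ≠ 0 := by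
      have : ((j + 1 : ℕ) : ZMod p) ≠ 0 := by
        rw [Ne, ZMod.natCast_eq_zero_iff]
        intro hd
        have := Nat.le_of_dvd (by omega) hd
        omega
      exact_mod_cast this
    have h1 := congrArg (Nat.cast : ℕ → ZMod p) (Nat.choose_succ_right_eq (p - 1 - a) j)
    have h2 := congrArg (Nat.cast : ℕ → ZMod p) (Nat.add_one_mul_choose_eq (a + j) j)
    have h3 : Nat.choose (a + j) j = Nat.choose (a + j) a := Nat.choose_symm_add.symm
    have h4 : Nat.choose (a + j + 1) (j + 1) = Nat.choose (a + (j + 1)) a := by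
      rw [add_assoc]; exact Nat.choose_symm_add.symm
    rw [h3, h4] at h2
    have h5 : ((p - 1 - a - j : ℕ) : ZMod p) = -(a + j + 1) := by
      have : (((p - 1 - a - j) + (a + j + 1) : ℕ) : ZMod p) = 0 := by
        rw [show p - 1 - a - j + (a + j + 1) = p by omega]; simp
      push_cast at this
      linear_combination this
    push_cast at h1 h2
    rw [h5, ih] at h1
    apply mul_right_cancel₀ hj
    rw [h1, pow_succ]
    linear_combination (-1) ^ j * (-1) * h2

lemma expand (s t k : ℕ) (hst : s + t = 4) (hk : 4 * k < p) (c v : ZMod p) (hv : 1 + c * v ≠ 0) :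
    v ^ (s * k) / (1 + c * v) ^ (4 * k)
      = ∑ m ∈ range p, (Nat.choose (m + t * k) (4 * k) : ZMod p) * (-c) ^ (m - s * k) * v ^ m := by
  have hsk : s * k + t * k = 4 * k := by rw [← add_mul, hst]
  obtain ⟨q, hq⟩ := Nat.exists_eq_add_of_lt hk
  have hF : (1 + c * v) ^ (p - 1) = 1 := ZMod.pow_card_sub_one_eq_one hv
  have e1 : v ^ (s * k) / (1 + c * v) ^ (4 * k) = v ^ (s * k) * (1 + c * v) ^ q := by
    rw [div_eq_iff (pow_ne_zero _ hv), mul_assoc, ← pow_add, show q + 4 * k = p - 1 by omega, hF, mul_one]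
  have e2 : range p = range (s * k + ((q + 1) + t * k)) := by congr 1; omega
  rw [e1, e2, sum_range_add, sum_range_add]
  have z1 : ∑ m ∈ range (s * k),
      (Nat.choose (m + t * k) (4 * k) : ZMod p) * (-c) ^ (m - s * k) * v ^ m = 0 := by
    apply sum_eq_zero
    intro m hm
    have hm := mem_range.1 hm
    rw [Nat.choose_eq_zero_of_lt (by omega)]; simp
  have z2 : ∑ j ∈ range (t * k), (Nat.choose (s * k + (q + 1 + j) + t * k) (4 * k) : ZMod p) *
      (-c) ^ (s * k + (q + 1 + j) - s * k) * v ^ (s * k + (q + 1 + j)) = 0 := by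
    apply sum_eq_zero
    intro j hj
    have hj := mem_range.1 hj
    have hd : p ∣ Nat.choose (s * k + (q + 1 + j) + t * k) (4 * k) := by
      rw [show s * k + (q + 1 + j) + t * k = 4 * k + (q + 1 + j) by omega]
      exact hp.out.dvd_choose_add (by omega) (by omega) (by omega)
    rw [(ZMod.natCast_eq_zero_iff _ _).2 hd]; simp
  rw [z1, z2, zero_add, add_zero, add_comm (1 : ZMod p), add_pow, mul_sum]
  apply sum_congr rfl
  intro j hj
  have hj := mem_range.1 hj
  have h1 := choose_mod (p := p) (4 * k) j (by omega)
  rw [show p - 1 - 4 * k = q by omega] at h1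
  rw [h1, show s * k + j + t * k = 4 * k + j by omega, Nat.add_sub_cancel_left, one_pow, pow_add,
    neg_pow c, mul_pow]
  ring

lemma sum_expand (s t : ℕ) (hst : s + t = 4) (c d v : ZMod p) (hc : c ≠ 0) (hv : 1 + c * v ≠ 0) :
    ∑ k ∈ range p, (M k : ZMod p) * (v ^ s / (d * (1 + c * v) ^ 4)) ^ k
      = ∑ m ∈ range p, (-c) ^ m * v ^ m * ∑ k ∈ range p,
        (M k : ZMod p) * Nat.choose (m + t * k) (4 * k) * (1 / (d * (-c) ^ s)) ^ k := by
  simp only [mul_sum]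
  rw [sum_comm]
  apply sum_congr rfl
  intro k hk
  have hk := mem_range.1 hk
  rcases lt_or_ge (4 * k) p with h | h
  · have e := expand s t k hst h c v hv
    have : (v ^ s / (d * (1 + c * v) ^ 4)) ^ k
        = (1 / d) ^ k * (v ^ (s * k) / (1 + c * v) ^ (4 * k)) := by
      rw [pow_mul, pow_mul, ← div_pow, ← mul_pow]
      congr 1
      rw [div_mul_div_comm, one_mul]
    rw [this, e, mul_sum, mul_sum]
    apply sum_congr rfl
    intro m _
    rcases lt_or_ge m (s * k) with hm | hm
    · have hsk : s * k + t * k = 4 * k := by rw [← add_mul, hst]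
      rw [Nat.choose_eq_zero_of_lt (by omega)]; simp
    · have e1 : (-c) ^ m = (-c) ^ (m - s * k) * ((-c) ^ s) ^ k := by
        rw [← pow_mul, ← pow_add]; congr 1; omega
      have e2 : (1 / (d * (-c) ^ s)) ^ k * ((-c) ^ s) ^ k = (1 / d) ^ k := by
        rw [← mul_pow]
        congr 1
        have : (-c) ^ s ≠ 0 := pow_ne_zero _ (neg_ne_zero.2 hc)
        rw [← div_div, div_mul_cancel₀ _ this]
      rw [e1, ← e2]
      ring
  · simp [M_zero k hk h]

end modp
end Stmt10

open Stmt10 in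
theorem stmt_10 (p : ℕ) [Fact p.Prime] (hodd : Odd p) (u : ℤ)
    (hu : ¬ (p : ℤ) ∣ u * (u + 1) * (3 * u + 1)) (hu3 : ¬ (u ≡ -3 [ZMOD (p : ℤ)])) :
    (∑ k ∈ Finset.range p,
        (Nat.choose (2 * k) k : ZMod p) ^ 2 * (Nat.choose (4 * k) (2 * k) : ZMod p) *
          ((u : ZMod p) / (9 * (1 + 3 * (u : ZMod p)) ^ 4)) ^ k)
      = ∑ k ∈ Finset.range p,
          (Nat.choose (2 * k) k : ZMod p) ^ 2 * (Nat.choose (4 * k) (2 * k) : ZMod p) *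
            ((u : ZMod p) ^ 3 / (9 * (3 + (u : ZMod p)) ^ 4)) ^ k := by
  have hM : ∀ k : ℕ, (Nat.choose (2 * k) k : ZMod p) ^ 2 * (Nat.choose (4 * k) (2 * k) : ZMod p)
      = (M k : ZMod p) := fun k => by unfold M; push_cast; rfl
  simp only [hM]
  by_cases h3 : (3 : ZMod p) = 0
  · have h9 : (9 : ZMod p) = 0 := by
      rw [show (9 : ZMod p) = 3 * 3 by norm_num, h3, mul_zero]
    simp [h9]
  have n1 : (1 + 3 * (u : ZMod p)) ≠ 0 := by
    intro h
    apply hu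
    apply Dvd.dvd.mul_left
    rw [← ZMod.intCast_zmod_eq_zero_iff_dvd]
    push_cast
    linear_combination h
  have n2 : (3 + (u : ZMod p)) ≠ 0 := by
    intro h
    apply hu3
    rw [← ZMod.intCast_eq_intCast_iff]
    push_cast
    linear_combination h
  have h9 : (9 : ZMod p) ≠ 0 := by
    rw [show (9 : ZMod p) = 3 * 3 by norm_num]; exact mul_ne_zero h3 h3
  have h27 : (27 : ZMod p) ≠ 0 := by
    rw [show (27 : ZMod p) = 3 * 9 by norm_num]; exact mul_ne_zero h3 h9
  obtain ⟨v, hv⟩ : ∃ v : ZMod p, (u : ZMod p) = 3 * v := ⟨u / 3, by field_simp⟩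
  rw [hv] at n1 n2 ⊢
  have m1 : 1 + 9 * v ≠ 0 := by convert n1 using 1; ring
  have m2 : 1 + 1 * v ≠ 0 := by
    intro h; apply n2; linear_combination 3 * h
  have a1 : 3 * v / (9 * (1 + 3 * (3 * v)) ^ 4) = v ^ 1 / (3 * (1 + 9 * v) ^ 4) := by
    rw [div_eq_div_iff (mul_ne_zero h9 (pow_ne_zero _ n1)) (mul_ne_zero h3 (pow_ne_zero _ m1))]
    ring
  have a2 : (3 * v) ^ 3 / (9 * (3 + 3 * v) ^ 4) = v ^ 3 / (27 * (1 + 1 * v) ^ 4) := by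
    rw [div_eq_div_iff (mul_ne_zero h9 (pow_ne_zero _ n2)) (mul_ne_zero h27 (pow_ne_zero _ m2))]
    ring
  rw [a1, a2, sum_expand 1 3 rfl 9 3 v h9 m1, sum_expand 3 1 rfl 1 27 v one_ne_zero m2]
  apply sum_congr rfl
  intro m hm
  have key := mod_id h3 m (mem_range.1 hm)
  have b1 : (1 : ZMod p) / (3 * (-9) ^ 1) = -1 / 27 := by
    rw [show (3 : ZMod p) * (-9) ^ 1 = -27 by norm_num, div_neg, neg_div]
  have b2 : (1 : ZMod p) / (27 * (-1) ^ 3) = -1 / 27 := by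
    rw [show (27 : ZMod p) * (-1) ^ 3 = -27 by norm_num, div_neg, neg_div]
  rw [b1, b2]
  apply mul_left_cancel₀ (pow_ne_zero m h3)
  have c1 : (27 : ZMod p) ^ m = 3 ^ m * 9 ^ m := by rw [← mul_pow]; norm_num
  rw [c1] at key
  rw [neg_pow (9 : ZMod p)]
  linear_combination (-1) ^ m * v ^ m * key
end
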